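/- arXiv:1409.2135 — 2 statements merged into one kernel-verified Lean document; each statement's English description precedes it below -/
import Mathlib

section
/- Let n ≥ 4. Let G be the graph on vertex set D ∪ U in which a diagonal variable x_{ii} ∈ D and a variable u ∈ U are adjacent if and only if i occurs as a row or column index of u (this graph is a cycle of length 2n whose vertices alternate between D and U). Then the initial ideal in_≺(I_{n-2}) is generated by the squarefree monomials ∏_{v ∈ N} v, where N ranges over all subsets of D ∪ U of cardinality n-2 that contain no edge of G. -/
open MvPolynomial

/-- The set `D` of diagonal variables `x_{ii}` (0-indexed). -/
def Dset (n : ℕ) : Set (Sym2 (Fin n)) := {v | ∃ i : Fin n, v = s(i, i)}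

/-- The set `U` of variables `x_{13}, x_{24}, …, x_{n-2,n}, x_{12}, x_{n-1,n}` (0-indexed). -/
def Uset (n : ℕ) : Set (Sym2 (Fin n)) :=
  {v | ∃ i j : Fin n, v = s(i, j) ∧
    ((j : ℕ) = (i : ℕ) + 2 ∨ ((i : ℕ) = 0 ∧ (j : ℕ) = 1) ∨
      ((i : ℕ) = n - 2 ∧ (j : ℕ) = n - 1))}

/-- `rank` encodes the linear order on the variables described in the paper:
`x_{11} ≻ … ≻ x_{nn} ≻ x_{13} ≻ … ≻ x_{n-2,n} ≻ x_{12} ≻ x_{n-1,n} ≻ (rest)`,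
where a smaller rank means a larger variable. -/
def IsGoodRank (n : ℕ) (rank : Sym2 (Fin n) → ℕ) : Prop :=
  Function.Injective rank ∧
  (∀ i : Fin n, rank s(i, i) = (i : ℕ)) ∧
  (∀ i j : Fin n, (j : ℕ) = (i : ℕ) + 2 → rank s(i, j) = n + (i : ℕ)) ∧
  (∀ i j : Fin n, (i : ℕ) = 0 → (j : ℕ) = 1 → rank s(i, j) = 2 * n - 2) ∧
  (∀ i j : Fin n, (i : ℕ) = n - 2 → (j : ℕ) = n - 1 → rank s(i, j) = 2 * n - 1) ∧
  (∀ v : Sym2 (Fin n), v ∉ Dset n ∪ Uset n → 2 * n ≤ rank v)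

/-- The degree reverse lexicographic order on exponent vectors induced by `rank`:
`a ≺ b` iff `deg a < deg b`, or the degrees agree and at the `rank`-largest (i.e. smallest)
variable where `a` and `b` differ, `a` has the larger exponent. -/
def DegRevLexLT {n : ℕ} (rank : Sym2 (Fin n) → ℕ) (a b : Sym2 (Fin n) →₀ ℕ) : Prop :=
  (a.sum fun _ e => e) < (b.sum fun _ e => e) ∨
    ((a.sum fun _ e => e) = (b.sum fun _ e => e) ∧
      ∃ v : Sym2 (Fin n), b v < a v ∧ ∀ w : Sym2 (Fin n), rank v < rank w → a w = b w)

/-- `μ` is the leading monomial (exponent vector) of `f` w.r.t. the degrevlex order `≺`. -/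
def IsLeadingMonomial {K : Type*} [Field K] {n : ℕ} (rank : Sym2 (Fin n) → ℕ)
    (f : MvPolynomial (Sym2 (Fin n)) K) (μ : Sym2 (Fin n) →₀ ℕ) : Prop :=
  μ ∈ f.support ∧ ∀ ν ∈ f.support, ν ≠ μ → DegRevLexLT rank ν μ

/-- The minor `[a_1,…,a_s | b_1,…,b_s]` of the generic symmetric matrix `X = (x_{ij})`. -/
noncomputable def symMinor (K : Type*) [Field K] {n s : ℕ} (a b : Fin s → Fin n) :
    MvPolynomial (Sym2 (Fin n)) K :=
  Matrix.det (Matrix.of fun k l => (MvPolynomial.X s(a k, b l) : MvPolynomial (Sym2 (Fin n)) K))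

/-- The ideal `I_t` of `S` generated by all `t × t` minors of the generic symmetric
matrix `X`. -/
noncomputable def minorsIdeal (K : Type*) [Field K] (n t : ℕ) :
    Ideal (MvPolynomial (Sym2 (Fin n)) K) :=
  Ideal.span {p | ∃ a b : Fin t → Fin n, StrictMono a ∧ StrictMono b ∧ p = symMinor K a b}

/-- The initial ideal `in_≺(I)`: the ideal generated by the leading monomials of the
nonzero elements of `I`. -/
noncomputable def initialIdeal {K : Type*} [Field K] {n : ℕ} (rank : Sym2 (Fin n) → ℕ)
    (I : Ideal (MvPolynomial (Sym2 (Fin n)) K)) : Ideal (MvPolynomial (Sym2 (Fin n)) K) :=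
  Ideal.span {p | ∃ f ∈ I, f ≠ 0 ∧ ∃ μ : Sym2 (Fin n) →₀ ℕ,
    IsLeadingMonomial rank f μ ∧ p = MvPolynomial.monomial μ 1}

/-- Adjacency in the graph `G` on vertex set `D ∪ U`: a diagonal variable `x_{ii}` and a
variable `u ∈ U` are adjacent iff `i` occurs as a row or column index of `u`. -/
def GAdj (n : ℕ) (v w : Sym2 (Fin n)) : Prop :=
  (∃ i : Fin n, v = s(i, i) ∧ w ∈ Uset n ∧ ∃ j k : Fin n, w = s(j, k) ∧ (i = j ∨ i = k)) ∨
  (∃ i : Fin n, w = s(i, i) ∧ v ∈ Uset n ∧ ∃ j k : Fin n, v = s(j, k) ∧ (i = j ∨ i = k))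


theorem det_mem_minorsIdeal (K : Type*) [Field K] {n t : ℕ} {Q : Type*} [Fintype Q] [DecidableEq Q]
    (hQ : Fintype.card Q = t) (r c : Q → Fin n) (hr : Function.Injective r)
    (hc : Function.Injective c) :
    Matrix.det (Matrix.of fun k l => (X s(r k, c l) : MvPolynomial (Sym2 (Fin n)) K)) ∈
      minorsIdeal K n t := by
  classical
  -- sorted enumerations
  have key : ∀ g : Q → Fin n, Function.Injective g →
      ∃ (a : Fin t → Fin n) (e : Q ≃ Fin t), StrictMono a ∧ ∀ k, g k = a (e k) := by
    intro g hg
    have hcard : (Finset.univ.image g).card = t := by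
      rw [Finset.card_image_of_injective _ hg, Finset.card_univ, hQ]
    let o := (Finset.univ.image g).orderIsoOfFin hcard
    have hbij : Function.Bijective (fun k : Q => o.symm ⟨g k, by simp⟩) := by
      rw [Fintype.bijective_iff_injective_and_card]
      refine ⟨?_, by simp [hQ]⟩
      intro x y hxy
      have := o.symm.injective hxy
      exact hg (by simpa using this)
    refine ⟨fun i => (o i : Fin n), Equiv.ofBijective _ hbij, ?_, ?_⟩
    · intro i j hij
      exact (o.strictMono hij)
    · intro k
      simp
  obtain ⟨a, e, ha, hae⟩ := key r hr
  obtain ⟨b, e', hb, hbe⟩ := key c hc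
  have h1 : (Matrix.of fun k l => (X s(r k, c l) : MvPolynomial (Sym2 (Fin n)) K)) =
      ((Matrix.of fun k l => (X s(a k, b l) : MvPolynomial (Sym2 (Fin n)) K)).submatrix
        (e.symm.trans e).symm (e.symm.trans e')).submatrix e e := by
    ext1 k l
    simp [hae, hbe]
  rw [h1, Matrix.det_submatrix_equiv_self]
  have h2 : Matrix.det (Matrix.of fun k l => (X s(a k, b l) : MvPolynomial (Sym2 (Fin n)) K)) ∈
      minorsIdeal K n t := Ideal.subset_span ⟨a, b, ha, hb, rfl⟩
  have h3 : ((Matrix.of fun k l => (X s(a k, b l) : MvPolynomial (Sym2 (Fin n)) K)).submatrix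
        (e.symm.trans e).symm (e.symm.trans e')) = 
        ((Matrix.of fun k l => (X s(a k, b l) : MvPolynomial (Sym2 (Fin n)) K)).submatrix id
         (e.symm.trans e')) := by
    ext1 k l; simp
  rw [h3, Matrix.det_permute']
  exact Ideal.mul_mem_left _ _ h2

/-- degree -/
theorem sum_single_deg {σ Q : Type*} (s : Finset Q) (g : Q → σ) :
    ((∑ k ∈ s, Finsupp.single (g k) 1 : σ →₀ ℕ).sum fun _ e => e) = s.card := by
  classical
  induction s using Finset.induction_on with
  | empty => simp
  | insert x s hx ih =>
    rw [Finset.sum_insert hx, Finsupp.sum_add_index' (by simp) (by simp), ih,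
      Finset.card_insert_of_notMem hx, Finsupp.sum_single_index rfl]; omega

/-- comparison lemma: replacing low-rank variables by others of which one has high rank. -/
theorem degRevLex_of_high {n : ℕ} {rank : Sym2 (Fin n) → ℕ} (hinj : Function.Injective rank)
    {Q : Type*} (S T : Finset Q) (hTS : T ⊆ S) (g h : Q → Sym2 (Fin n)) (R : ℕ)
    (hgh : ∀ k ∈ S, k ∉ T → g k = h k) (hh : ∀ k ∈ T, rank (h k) < R)
    (hg : ∃ k ∈ T, R ≤ rank (g k)) :
    DegRevLexLT rank (∑ k ∈ S, Finsupp.single (g k) 1) (∑ k ∈ S, Finsupp.single (h k) 1) := by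
  classical
  right
  refine ⟨by rw [sum_single_deg, sum_single_deg], ?_⟩
  obtain ⟨k0, hk0, hk0R⟩ := hg
  obtain ⟨m, hm, hmax⟩ := Finset.exists_max_image T (fun k => rank (g k)) ⟨k0, hk0⟩
  have hmR : R ≤ rank (g m) := hk0R.trans (hmax _ hk0)
  have split : ∀ f : Q → Sym2 (Fin n), ∀ v, (∑ k ∈ S, Finsupp.single (f k) 1 : Sym2 (Fin n) →₀ ℕ) v
      = (∑ k ∈ S \ T, (Finsupp.single (f k) 1 : Sym2 (Fin n) →₀ ℕ) v)
        + ∑ k ∈ T, (Finsupp.single (f k) 1 : Sym2 (Fin n) →₀ ℕ) v := by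
    intro f v
    rw [Finsupp.finsetSum_apply, Finset.sum_sdiff hTS]
  have hsame : ∀ v, (∑ k ∈ S \ T, (Finsupp.single (g k) 1 : Sym2 (Fin n) →₀ ℕ) v) =
      (∑ k ∈ S \ T, (Finsupp.single (h k) 1 : Sym2 (Fin n) →₀ ℕ) v) := by
    intro v
    refine Finset.sum_congr rfl fun k hk => ?_
    rw [Finset.mem_sdiff] at hk
    rw [hgh k hk.1 hk.2]
  have hzero : ∀ v, R ≤ rank v → ∑ k ∈ T, (Finsupp.single (h k) 1 : Sym2 (Fin n) →₀ ℕ) v = 0 := by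
    intro v hv
    refine Finset.sum_eq_zero fun k hk => ?_
    rw [Finsupp.single_apply, if_neg]
    rintro rfl
    exact absurd (hh k hk) (by omega)
  refine ⟨g m, ?_, ?_⟩
  · rw [split g, split h, hsame, hzero _ hmR]
    have : 0 < ∑ k ∈ T, (Finsupp.single (g k) 1 : Sym2 (Fin n) →₀ ℕ) (g m) := by
      refine Finset.sum_pos' (fun _ _ => Nat.zero_le _) ⟨m, hm, by simp⟩
    omega
  · intro w hw
    rw [split g, split h, hsame, hzero _ (by omega)]
    congr 1
    refine Finset.sum_eq_zero fun k hk => ?_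
    rw [Finsupp.single_apply, if_neg]
    rintro rfl
    exact absurd (hmax k hk) (by omega)

theorem degRevLex_irrefl {n : ℕ} {rank : Sym2 (Fin n) → ℕ} (a : Sym2 (Fin n) →₀ ℕ) :
    ¬ DegRevLexLT rank a a := by
  rintro (h | ⟨_, v, hv, _⟩)
  · exact lt_irrefl _ h
  · exact lt_irrefl _ hv

/-- A determinant whose diagonal product dominates. -/
theorem det_leading {K : Type*} [Field K] {n : ℕ} {rank : Sym2 (Fin n) → ℕ}
    {Q : Type*} [Fintype Q] [DecidableEq Q] (r c : Q → Fin n)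
    (H : ∀ σ : Equiv.Perm Q, σ ≠ 1 → DegRevLexLT rank
      (∑ k, Finsupp.single s(r (σ k), c k) 1) (∑ k, Finsupp.single s(r k, c k) 1)) :
    IsLeadingMonomial rank
      (Matrix.det (Matrix.of fun k l => (X s(r k, c l) : MvPolynomial (Sym2 (Fin n)) K)))
      (∑ k, Finsupp.single s(r k, c k) 1) := by
  classical
  set ν : Equiv.Perm Q → (Sym2 (Fin n) →₀ ℕ) := fun σ => ∑ k, Finsupp.single s(r (σ k), c k) 1
    with hν
  have hdet : Matrix.det (Matrix.of fun k l => (X s(r k, c l) : MvPolynomial (Sym2 (Fin n)) K)) =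
      ∑ σ : Equiv.Perm Q, monomial (ν σ) (((Equiv.Perm.sign σ : ℤ) : K)) := by
    rw [Matrix.det_apply']
    refine Finset.sum_congr rfl fun σ _ => ?_
    have : ∏ i, (Matrix.of fun k l => (X s(r k, c l) : MvPolynomial (Sym2 (Fin n)) K)) (σ i) i
        = monomial (ν σ) 1 := by
      simp only [Matrix.of_apply, hν]
      rw [MvPolynomial.monomial_sum_one]
      rfl
    rw [this]
    rw [← mul_one (((Equiv.Perm.sign σ : ℤ) : K)), ← MvPolynomial.C_mul_monomial]
    simp
  have hcoeff : ∀ m, coeff m (Matrix.det (Matrix.of fun k l =>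
      (X s(r k, c l) : MvPolynomial (Sym2 (Fin n)) K))) =
      ∑ σ : Equiv.Perm Q, if ν σ = m then (((Equiv.Perm.sign σ : ℤ) : K)) else 0 := by
    intro m
    rw [hdet, coeff_sum]
    simp [coeff_monomial]
  have h1 : (∑ k, Finsupp.single s(r k, c k) 1 : Sym2 (Fin n) →₀ ℕ) = ν 1 := rfl
  rw [h1] at *
  constructor
  · rw [mem_support_iff, hcoeff, Finset.sum_eq_single 1]
    · simp
    · intro σ _ hσ
      rw [if_neg]
      intro h
      have := H σ hσ
      rw [show (∑ k, Finsupp.single s(r (σ k), c k) 1 : Sym2 (Fin n) →₀ ℕ) = ν σ from rfl, h] at this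
      exact degRevLex_irrefl _ this
    · simp
  · intro m hm hne
    rw [mem_support_iff, hcoeff] at hm
    obtain ⟨σ, _, hσ⟩ := Finset.exists_ne_zero_of_sum_ne_zero hm
    have h2 : ν σ = m := by
      by_contra h
      rw [if_neg h] at hσ; exact hσ rfl
    subst h2
    exact H σ (fun h => hne (by rw [h]))


/-- a cyclic enumeration of the `n`-cycle formed by the variables in `U`. -/
structure IsEnum (n : ℕ) (c : ℕ → Fin n) : Prop where
  inj : ∀ p q, c p = c q ↔ p % n = q % n
  surj : ∀ i, ∃ p, p < n ∧ c p = i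
  umem : ∀ v, v ∈ Uset n ↔ ∃ p, v = s(c p, c (p + 1))

theorem exists_enum (n : ℕ) (hn : 4 ≤ n) : ∃ c, IsEnum n c := by
  let f : ℕ → ℕ := fun r => if 2 * r < n then 2 * r else 2 * (n - r) - 1
  have hf : ∀ r, r < n → f r < n := by
    intro r hr; simp only [f]; split_ifs <;> omega
  have hmod : ∀ p, p % n < n := fun p => Nat.mod_lt _ (by omega)
  have hfinj : ∀ p q, p < n → q < n → f p = f q → p = q := by
    intro p q hp hq h
    simp only [f] at h
    split_ifs at h <;> omega
  have hsucc : ∀ p, (p + 1) % n = if p % n + 1 = n then 0 else p % n + 1 := by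
    intro p
    have := hmod p
    rw [Nat.add_mod, Nat.mod_eq_of_lt (show 1 < n by omega)]
    split_ifs with h
    · rw [h, Nat.mod_self]
    · exact Nat.mod_eq_of_lt (by omega)
  refine ⟨fun p => ⟨f (p % n), hf _ (hmod p)⟩, ?_, ?_, ?_⟩
  · intro p q
    rw [Fin.mk.injEq]
    exact ⟨hfinj _ _ (hmod p) (hmod q), fun h => by rw [h]⟩
  · intro i
    have hi := i.2
    by_cases h : (i : ℕ) % 2 = 0
    · refine ⟨i / 2, by omega, ?_⟩
      apply Fin.ext
      simp only [f]
      rw [Nat.mod_eq_of_lt (by omega), if_pos (by omega)]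
      omega
    · refine ⟨n - (i + 1) / 2, by omega, ?_⟩
      apply Fin.ext
      simp only [f]
      rw [Nat.mod_eq_of_lt (by omega), if_neg (by omega)]
      omega
  · intro v
    constructor
    · rintro ⟨i, j, rfl, h⟩
      have hi := i.2
      have hj := j.2
      rcases h with h | ⟨h1, h2⟩ | ⟨h1, h2⟩
      · by_cases hpar : (i : ℕ) % 2 = 0
        · refine ⟨i / 2, ?_⟩
          rw [Sym2.eq_iff]; left
          simp only [Fin.ext_iff, hsucc, f]
          have : (i : ℕ) / 2 % n = i / 2 := Nat.mod_eq_of_lt (by omega)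
          rw [this]
          split_ifs <;> omega
        · refine ⟨n - (j + 1) / 2, ?_⟩
          rw [Sym2.eq_iff]; right
          simp only [Fin.ext_iff, hsucc, f]
          have : (n - ((j : ℕ) + 1) / 2) % n = n - (j + 1) / 2 := Nat.mod_eq_of_lt (by omega)
          rw [this]
          split_ifs <;> omega
      · refine ⟨n - 1, ?_⟩
        rw [Sym2.eq_iff]; right
        simp only [Fin.ext_iff, hsucc, f]
        have : (n - 1) % n = n - 1 := Nat.mod_eq_of_lt (by omega)
        rw [this]
        split_ifs <;> omega
      · refine ⟨(n - 1) / 2, ?_⟩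
        have : ((n - 1) / 2) % n = (n - 1) / 2 := Nat.mod_eq_of_lt (by omega)
        rw [Sym2.eq_iff]
        simp only [Fin.ext_iff, hsucc, f]
        rw [this]
        split_ifs <;> omega
    · rintro ⟨p, rfl⟩
      have hp := hmod p
      have hs := hsucc p
      by_cases h1 : p % n + 1 = n
      · rw [if_pos h1] at hs
        refine ⟨⟨0, by omega⟩, ⟨1, by omega⟩, ?_, Or.inr (Or.inl ⟨rfl, rfl⟩)⟩
        rw [Sym2.eq_iff]; right
        simp only [Fin.ext_iff, hs, f]
        split_ifs <;> omega
      · rw [if_neg h1] at hs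
        by_cases h2 : 2 * (p % n + 1) < n
        · refine ⟨⟨2 * (p % n), by omega⟩, ⟨2 * (p % n) + 2, by omega⟩, ?_, Or.inl rfl⟩
          rw [Sym2.eq_iff]; left
          simp only [Fin.ext_iff, hs, f]
          split_ifs <;> omega
        · by_cases h3 : 2 * (p % n) < n
          · refine ⟨⟨n - 2, by omega⟩, ⟨n - 1, by omega⟩, ?_, Or.inr (Or.inr ⟨rfl, rfl⟩)⟩
            rw [Sym2.eq_iff]
            simp only [Fin.ext_iff, hs, f]
            split_ifs <;> omega
          · refine ⟨⟨2 * (n - p % n) - 3, by omega⟩, ⟨2 * (n - p % n) - 1, by omega⟩, ?_,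
              Or.inl (by simp only; omega)⟩
            rw [Sym2.eq_iff]; right
            simp only [Fin.ext_iff, hs, f]
            split_ifs <;> omega

namespace IsEnum

variable {n : ℕ} {c : ℕ → Fin n}

theorem rot (h : IsEnum n c) (r : ℕ) : IsEnum n (fun p => c (p + r)) := by
  have hn : 0 < n := lt_of_le_of_lt (Nat.zero_le _) (c 0).2
  have hinj : ∀ p q, c (p + r) = c (q + r) ↔ p % n = q % n := by
    intro p q
    rw [h.inj]
    exact ⟨fun h => Nat.ModEq.add_right_cancel' r h, fun h => Nat.ModEq.add_right r h⟩
  refine ⟨hinj, ?_, ?_⟩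
  · intro i
    obtain ⟨p, _, rfl⟩ := h.surj i
    refine ⟨(p + (n - r % n)) % n, Nat.mod_lt _ hn, ?_⟩
    rw [h.inj]
    have h1 : (p + (n - r % n)) % n + r ≡ p + (n - r % n) + r % n [MOD n] :=
      Nat.ModEq.add (Nat.mod_modEq _ _) (Nat.mod_modEq _ _).symm
    have h2 : p + (n - r % n) + r % n = p + n := by
      have := Nat.mod_lt r hn
      omega
    rw [h2] at h1
    exact h1.trans (by simp [Nat.ModEq])
  · intro v
    rw [h.umem]
    constructor
    · rintro ⟨p, rfl⟩
      refine ⟨p + (n - r % n), ?_⟩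
      have e : ∀ q, c (q + (n - r % n) + r) = c q := by
        intro q
        rw [h.inj]
        have h1 : q + (n - r % n) + r ≡ q + (n - r % n) + r % n [MOD n] :=
          Nat.ModEq.add rfl (Nat.mod_modEq _ _).symm
        have h2 : q + (n - r % n) + r % n = q + n := by
          have := Nat.mod_lt r hn
          omega
        rw [h2] at h1
        exact h1.trans (by simp [Nat.ModEq])
      rw [e p, show p + (n - r % n) + 1 + r = (p + 1) + (n - r % n) + r by ring, e]
    · rintro ⟨p, rfl⟩
      exact ⟨p + r, by rw [show p + 1 + r = p + r + 1 by ring]⟩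

theorem periodic (h : IsEnum n c) (p : ℕ) : c (p + n) = c p := by
  rw [h.inj]; simp

theorem modc (h : IsEnum n c) (p : ℕ) : c (p % n) = c p := by
  rw [h.inj]; simp

theorem modc1 (h : IsEnum n c) (p : ℕ) : c (p % n + 1) = c (p + 1) := by
  rw [h.inj]; simp

theorem eq_lt (h : IsEnum n c) {p q : ℕ} (hp : p < n) (hq : q < n) : c p = c q ↔ p = q := by
  rw [h.inj, Nat.mod_eq_of_lt hp, Nat.mod_eq_of_lt hq]

theorem umem_lt (h : IsEnum n c) (v) : v ∈ Uset n ↔ ∃ p, p < n ∧ v = s(c p, c (p + 1)) := by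
  have hn : 0 < n := lt_of_le_of_lt (Nat.zero_le _) (c 0).2
  rw [h.umem]
  constructor
  · rintro ⟨p, rfl⟩
    exact ⟨p % n, Nat.mod_lt _ hn, by rw [h.modc, h.modc1]⟩
  · rintro ⟨p, _, rfl⟩; exact ⟨p, rfl⟩

theorem dmem_lt (h : IsEnum n c) (v) : v ∈ Dset n ↔ ∃ p, p < n ∧ v = s(c p, c p) := by
  constructor
  · rintro ⟨i, rfl⟩
    obtain ⟨p, hp, rfl⟩ := h.surj i
    exact ⟨p, hp, rfl⟩
  · rintro ⟨p, _, rfl⟩; exact ⟨_, rfl⟩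

theorem ne_succ (h : IsEnum n c) (hn : 2 ≤ n) (p : ℕ) : c p ≠ c (p + 1) := by
  rw [Ne, ← h.modc, ← h.modc (p + 1), h.eq_lt (Nat.mod_lt _ (by omega)) (Nat.mod_lt _ (by omega))]
  intro h
  have h2 : p + 0 ≡ p + 1 [MOD n] := h
  have h3 := Nat.ModEq.add_left_cancel' p h2
  rw [Nat.ModEq, Nat.mod_eq_of_lt (by omega), Nat.mod_eq_of_lt (by omega)] at h3
  omega

end IsEnum

theorem rank_D {n : ℕ} {rank : Sym2 (Fin n) → ℕ} (h : IsGoodRank n rank) (i : Fin n) :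
    rank s(i, i) < n := by
  rw [h.2.1]; exact i.2

theorem rank_U {n : ℕ} {rank : Sym2 (Fin n) → ℕ} (hn : 4 ≤ n) (h : IsGoodRank n rank) {v}
    (hv : v ∈ Uset n) : n ≤ rank v ∧ rank v < 2 * n := by
  obtain ⟨i, j, rfl, h1 | ⟨h1, h2⟩ | ⟨h1, h2⟩⟩ := hv
  · rw [h.2.2.1 _ _ h1]; have := j.2; omega
  · rw [h.2.2.2.1 _ _ h1 h2]; omega
  · rw [h.2.2.2.2.1 _ _ h1 h2]; omega

theorem rank_rest {n : ℕ} {rank : Sym2 (Fin n) → ℕ} (h : IsGoodRank n rank) {v}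
    (hv : v ∉ Dset n ∪ Uset n) : 2 * n ≤ rank v := h.2.2.2.2.2 v hv

theorem rank_nondiag {n : ℕ} {rank : Sym2 (Fin n) → ℕ} (hn : 4 ≤ n) (h : IsGoodRank n rank)
    {i j : Fin n} (hij : i ≠ j) : n ≤ rank s(i, j) := by
  by_cases hU : s(i, j) ∈ Uset n
  · exact (rank_U hn h hU).1
  · have : s(i, j) ∉ Dset n ∪ Uset n := by
      rintro (⟨k, hk⟩ | hk)
      · rw [Sym2.eq_iff] at hk
        apply hij
        rcases hk with ⟨rfl, rfl⟩ | ⟨rfl, rfl⟩ <;> rfl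
      · exact hU hk
    have := rank_rest h this
    omega


/-- minors with linear-position rows/cols: combinatorial core. -/
theorem perm_core (n a t b : ℕ) (hat : a ≤ t) (htb : t < b) (hbn : b ≤ n - 1)
    {Q : Type*} [Fintype Q] [DecidableEq Q] (p : Q → ℕ) (hp : Function.Injective p)
    (hpn : ∀ k, p k < n - 1) (hpt : ∀ k, p k ≠ t) (r c : Q → ℕ)
    (hr : ∀ k, r k = if p k < b then p k else p k + 1)
    (hc : ∀ k, c k = if a ≤ p k ∧ p k < t then p k + 1 else p k)
    (σ : Equiv.Perm Q)
    (hadj : ∀ k, r (σ k) = c k ∨ r (σ k) = c k + 1 ∨ c k = r (σ k) + 1 ∨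
      (r (σ k) = n - 1 ∧ c k = 0)) :
    ∀ k, (a ≤ p k ∧ p k < t) ∨ b ≤ p k → σ k = k := by
  classical
  -- invariance of finite sets
  have inv : ∀ P : Q → Prop, (∀ k, P k → P (σ.symm k)) → ∀ k, P k → P (σ k) := by
    intro P hP k hk
    have hsub : (Finset.univ.filter P).image σ.symm ⊆ Finset.univ.filter P := by
      intro x hx
      simp only [Finset.mem_image, Finset.mem_filter, Finset.mem_univ, true_and] at hx ⊢
      obtain ⟨y, hy, rfl⟩ := hx
      exact hP y hy
    have heq := Finset.eq_of_subset_of_card_le hsub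
      (by rw [Finset.card_image_of_injective _ σ.symm.injective])
    have hk' : k ∈ (Finset.univ.filter P).image σ.symm := by
      rw [heq]; simpa using hk
    simp only [Finset.mem_image, Finset.mem_filter, Finset.mem_univ, true_and] at hk'
    obtain ⟨y, hy, rfl⟩ := hk'
    simpa using hy
  have hadj' : ∀ k, r k = c (σ.symm k) ∨ r k = c (σ.symm k) + 1 ∨ c (σ.symm k) = r k + 1 ∨
      (r k = n - 1 ∧ c (σ.symm k) = 0) := by
    intro k
    simpa using hadj (σ.symm k)
  have low' : ∀ j, a ≤ j → j ≤ t → ∀ k, p k < j → p (σ.symm k) < j := by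
    intro j haj hjt k hk
    have h1 := hadj' k
    have h2 := hr k
    have h3 := hc (σ.symm k)
    have h4 := hpt (σ.symm k)
    rw [if_pos (by omega)] at h2
    split_ifs at h3 <;> omega
  have low : ∀ j, a ≤ j → j ≤ t → ∀ k, p k < j → p (σ k) < j := fun j h1 h2 =>
    inv (fun k => p k < j) (low' j h1 h2)
  have high' : ∀ j, b ≤ j → ∀ k, j ≤ p k → j ≤ p (σ.symm k) := by
    intro j hbj k hk
    have h1 := hadj' k
    have h2 := hr k
    have h3 := hc (σ.symm k)
    have h4 := hpt (σ.symm k)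
    have h5 := hpn k
    have h6 := low a le_rfl hat (σ.symm k)
    rw [Equiv.apply_symm_apply] at h6
    rw [if_neg (by omega)] at h2
    split_ifs at h3 <;> omega
  have high : ∀ j, b ≤ j → ∀ k, j ≤ p k → j ≤ p (σ k) := fun j h1 =>
    inv (fun k => j ≤ p k) (high' j h1)
  rintro k (⟨h1, h2⟩ | h1)
  · apply hp
    have e1 := low (p k + 1) (by omega) (by omega) k (by omega)
    by_contra hne
    have e2 := low' (p k) h1 (by omega) (σ k) (by omega)
    rw [Equiv.symm_apply_apply] at e2
    omega
  · apply hp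
    have e1 := high (p k) h1 k le_rfl
    by_contra hne
    have e2 := high' (p k + 1) (by omega) (σ k) (by omega)
    rw [Equiv.symm_apply_apply] at e2
    omega

/-- structure of an independent set of size `n - 2`. -/
theorem seg_split (P E : ℕ → Prop) (hPE : ∀ p, ¬ (P p ∧ E p)) (hEP : ∀ p, ¬ (E p ∧ P (p + 1)))
    (lo hi : ℕ) (hlh : lo ≤ hi) (hor : ∀ p, lo ≤ p → p < hi → P p ∨ E p) :
    ∃ a, lo ≤ a ∧ a ≤ hi ∧ (∀ p, lo ≤ p → p < a → P p) ∧ (∀ p, a ≤ p → p < hi → E p) := by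
  classical
  have hex : ∃ p, lo ≤ p ∧ (p = hi ∨ E p) := ⟨hi, hlh, Or.inl rfl⟩
  refine ⟨Nat.find hex, (Nat.find_spec hex).1, Nat.find_min' hex ⟨hlh, Or.inl rfl⟩, ?_, ?_⟩
  · intro p h1 h2
    have h3 := Nat.find_min hex h2
    have h4 : p < hi := lt_of_lt_of_le h2 (Nat.find_min' hex ⟨hlh, Or.inl rfl⟩)
    rcases hor p h1 h4 with h | h
    · exact h
    · exact absurd ⟨h1, Or.inr h⟩ h3
  · intro p h1
    induction p, h1 using Nat.le_induction with
    | base =>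
      intro h2
      rcases (Nat.find_spec hex).2 with h | h
      · omega
      · exact h
    | succ p hp ih =>
      intro h2
      have h3 := ih (by omega)
      rcases hor (p + 1) (by have := (Nat.find_spec hex).1; omega) h2 with h | h
      · exact absurd ⟨h3, h⟩ (hEP p)
      · exact h

theorem indep_structure {n : ℕ} (hn : 4 ≤ n) (N : Finset (Sym2 (Fin n)))
    (hNs : (↑N : Set (Sym2 (Fin n))) ⊆ Dset n ∪ Uset n) (hcard : N.card = n - 2)
    (hind : ∀ v ∈ N, ∀ w ∈ N, ¬ GAdj n v w) :
    ∃ c, IsEnum n c ∧ ∃ a t b : ℕ, a ≤ t ∧ t < b ∧ b ≤ n - 1 ∧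
      N = ((Finset.range (n - 1)).erase t).image (fun p =>
        s(c (if p < b then p else p + 1), c (if a ≤ p ∧ p < t then p + 1 else p))) := by
  classical
  obtain ⟨c, hc⟩ := exists_enum n hn
  -- general facts for any enumeration
  have PE : ∀ c, IsEnum n c → ∀ p, ¬ (s(c p, c p) ∈ N ∧ s(c p, c (p + 1)) ∈ N) := by
    rintro c hc p ⟨h1, h2⟩
    exact hind _ h1 _ h2 (Or.inl ⟨c p, rfl, (hc.umem _).2 ⟨p, rfl⟩, c p, c (p + 1), rfl, Or.inl rfl⟩)
  have EP : ∀ c, IsEnum n c → ∀ p, ¬ (s(c p, c (p + 1)) ∈ N ∧ s(c (p + 1), c (p + 1)) ∈ N) := by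
    rintro c hc p ⟨h1, h2⟩
    exact hind _ h2 _ h1 (Or.inl ⟨c (p + 1), rfl, (hc.umem _).2 ⟨p, rfl⟩, c p, c (p + 1), rfl,
      Or.inr rfl⟩)
  have cnt : ∀ c, IsEnum n c → ((Finset.range n).filter (fun p => s(c p, c p) ∈ N ∨
      s(c p, c (p + 1)) ∈ N)).card = n - 2 := by
    intro c hc
    rw [← hcard]
    refine Finset.card_bij (fun p _ => if s(c p, c p) ∈ N then s(c p, c p) else s(c p, c (p + 1)))
      ?_ ?_ ?_
    · intro p hp
      simp only [Finset.mem_filter] at hp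
      split_ifs with h
      · exact h
      · exact hp.2.resolve_left h
    · intro p hp q hq h
      simp only [Finset.mem_filter, Finset.mem_range] at hp hq
      have hps := hc.ne_succ (by omega) p
      have hqs := hc.ne_succ (by omega) q
      split_ifs at h with h1 h2 h2
      · rw [Sym2.eq_iff] at h
        exact (hc.eq_lt hp.1 hq.1).1 (by tauto)
      · rw [Sym2.eq_iff] at h
        exfalso
        rcases h with ⟨e1, e2⟩ | ⟨e1, e2⟩
        · exact hqs (e1.symm.trans e2)
        · exact hqs (e2.symm.trans e1)
      · rw [Sym2.eq_iff] at h
        exfalso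
        rcases h with ⟨e1, e2⟩ | ⟨e1, e2⟩
        · exact hps (e1.trans e2.symm)
        · exact hps (e1.trans e2.symm)
      · rw [Sym2.eq_iff] at h
        rcases h with ⟨e1, e2⟩ | ⟨e1, e2⟩
        · exact (hc.eq_lt hp.1 hq.1).1 e1
        · exfalso
          rw [hc.inj] at e1 e2
          have e3 : q + 2 ≡ q [MOD n] := by
            have := Nat.ModEq.add_right 1 (show p ≡ q + 1 [MOD n] from e1)
            exact this.symm.trans e2
          have e4 : 2 ≡ 0 [MOD n] := Nat.ModEq.add_left_cancel' q e3
          rw [Nat.ModEq, Nat.mod_eq_of_lt (by omega), Nat.zero_mod] at e4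
          omega
    · intro v hv
      rcases hNs hv with h | h
      · obtain ⟨p, hp, rfl⟩ := (hc.dmem_lt v).1 h
        have hv' : s(c p, c p) ∈ N := hv
        exact ⟨p, by simp [hp, hv'], by simp [hv']⟩
      · obtain ⟨p, hp, rfl⟩ := (hc.umem_lt v).1 h
        have hv' : s(c p, c (p + 1)) ∈ N := hv
        refine ⟨p, by simp [hp, hv'], ?_⟩
        rw [if_neg]
        exact fun h => PE c hc p ⟨h, hv'⟩
  -- find one missed vertex and rotate
  obtain ⟨p0, hp0n, hp0⟩ : ∃ p, p < n ∧ ¬ (s(c p, c p) ∈ N ∨ s(c p, c (p + 1)) ∈ N) := by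
    by_contra hcon
    push Not at hcon
    have h1 := cnt c hc
    rw [Finset.filter_true_of_mem (by
      intro p hp
      by_cases h : s(c p, c p) ∈ N
      · exact Or.inl h
      · by_contra h2
        have := hcon p (Finset.mem_range.1 hp)
        tauto)] at h1
    simp at h1; omega
  have hc' := hc.rot (p0 + 1)
  set d : ℕ → Fin n := fun p => c (p + (p0 + 1)) with hd
  have hmiss : ¬ (s(d (n - 1), d (n - 1)) ∈ N ∨ s(d (n - 1), d (n - 1 + 1)) ∈ N) := by
    have e1 : d (n - 1) = c p0 := by
      simp only [hd]
      rw [show n - 1 + (p0 + 1) = p0 + n by omega, hc.periodic]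
    have e2 : d (n - 1 + 1) = c (p0 + 1) := by
      simp only [hd]
      rw [show n - 1 + 1 + (p0 + 1) = p0 + 1 + n by omega, hc.periodic]
    rw [e1, e2]; exact hp0
  have hcnt := cnt d hc'
  have hsplit : (Finset.range n).filter (fun p => s(d p, d p) ∈ N ∨ s(d p, d (p + 1)) ∈ N) =
      (Finset.range (n - 1)).filter (fun p => s(d p, d p) ∈ N ∨ s(d p, d (p + 1)) ∈ N) := by
    ext p
    simp only [Finset.mem_filter, Finset.mem_range]
    constructor
    · rintro ⟨h1, h2⟩
      refine ⟨?_, h2⟩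
      by_contra h3
      have : p = n - 1 := by omega
      subst this
      exact hmiss h2
    · rintro ⟨h1, h2⟩
      exact ⟨by omega, h2⟩
  rw [hsplit] at hcnt
  have hcompl := Finset.card_filter_add_card_filter_not (s := Finset.range (n - 1))
    (fun p => s(d p, d p) ∈ N ∨ s(d p, d (p + 1)) ∈ N)
  rw [hcnt, Finset.card_range] at hcompl
  have hone : ((Finset.range (n - 1)).filter
    (fun p => ¬ (s(d p, d p) ∈ N ∨ s(d p, d (p + 1)) ∈ N))).card = 1 := by omega
  obtain ⟨t, ht⟩ := Finset.card_eq_one.1 hone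
  have ht1 : t < n - 1 ∧ ¬ (s(d t, d t) ∈ N ∨ s(d t, d (t + 1)) ∈ N) := by
    have : t ∈ ({t} : Finset ℕ) := by simp
    rw [← ht] at this
    simpa using this
  have hor : ∀ p, p < n - 1 → p ≠ t → s(d p, d p) ∈ N ∨ s(d p, d (p + 1)) ∈ N := by
    intro p h1 h2
    by_contra h3
    have : p ∈ ({t} : Finset ℕ) := by
      rw [← ht]; simp only [Finset.mem_filter, Finset.mem_range]; exact ⟨h1, h3⟩
    exact h2 (by simpa using this)
  obtain ⟨a, _, hat, ha1, ha2⟩ := seg_split (fun p => s(d p, d p) ∈ N) (fun p => s(d p, d (p + 1)) ∈ N)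
    (PE d hc') (EP d hc') 0 t (Nat.zero_le _) (fun p _ h => hor p (by omega) (by omega))
  obtain ⟨b, htb, hbn, hb1, hb2⟩ := seg_split (fun p => s(d p, d p) ∈ N)
    (fun p => s(d p, d (p + 1)) ∈ N)
    (PE d hc') (EP d hc') (t + 1) (n - 1) (by omega) (fun p _ h => hor p (by omega) (by omega))
  refine ⟨d, hc', a, t, b, hat, htb, hbn, ?_⟩
  ext v
  simp only [Finset.mem_image, Finset.mem_erase, Finset.mem_range]
  constructor
  · intro hv
    rcases hNs hv with h | h
    · obtain ⟨p, hp, rfl⟩ := (hc'.dmem_lt v).1 h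
      have hpm : p ≠ n - 1 := by rintro rfl; exact hmiss (Or.inl hv)
      have hpt : p ≠ t := by rintro rfl; exact ht1.2 (Or.inl hv)
      have h1 : ¬ (a ≤ p ∧ p < t) := fun h => PE d hc' p ⟨hv, ha2 p h.1 h.2⟩
      have h2 : p < b := by
        by_contra h2
        exact PE d hc' p ⟨hv, hb2 p (by omega) (by omega)⟩
      exact ⟨p, ⟨hpt, by omega⟩, by rw [if_neg h1, if_pos h2]⟩
    · obtain ⟨p, hp, rfl⟩ := (hc'.umem_lt v).1 h
      have hpm : p ≠ n - 1 := by rintro rfl; exact hmiss (Or.inr hv)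
      have hpt : p ≠ t := by rintro rfl; exact ht1.2 (Or.inr hv)
      refine ⟨p, ⟨hpt, by omega⟩, ?_⟩
      by_cases hlt : p < t
      · have : a ≤ p := by
          by_contra h2
          exact PE d hc' p ⟨ha1 p (by omega) (by omega), hv⟩
        rw [if_pos (show p < b by omega), if_pos ⟨this, hlt⟩]
      · have : b ≤ p := by
          by_contra h2
          exact PE d hc' p ⟨hb1 p (by omega) (by omega), hv⟩
        rw [if_neg (by omega), if_neg (by omega), Sym2.eq_swap]
  · rintro ⟨p, ⟨hpt, hpn⟩, rfl⟩
    by_cases hlt : p < t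
    · rw [if_pos (by omega)]
      by_cases hap : a ≤ p
      · rw [if_pos ⟨hap, hlt⟩]; exact ha2 p hap hlt
      · rw [if_neg (by omega)]; exact ha1 p (by omega) (by omega)
    · rw [if_neg (show ¬ (a ≤ p ∧ p < t) by omega)]
      by_cases hbp : p < b
      · rw [if_pos hbp]; exact hb1 p (by omega) (by omega)
      · rw [if_neg hbp, Sym2.eq_swap]; exact hb2 p (by omega) (by omega)

theorem part_one {K : Type*} [Field K] (n : ℕ) (hn : 4 ≤ n)
    (rank : Sym2 (Fin n) → ℕ) (hrank : IsGoodRank n rank) (N : Finset (Sym2 (Fin n)))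
    (hNs : (↑N : Set (Sym2 (Fin n))) ⊆ Dset n ∪ Uset n) (hcard : N.card = n - 2)
    (hind : ∀ v ∈ N, ∀ w ∈ N, ¬ GAdj n v w) :
    (∏ v ∈ N, X v : MvPolynomial (Sym2 (Fin n)) K) ∈ initialIdeal rank (minorsIdeal K n (n - 2)) := by
  classical
  obtain ⟨c, hc, a, t, b, hat, htb, hbn, hN⟩ := indep_structure hn N hNs hcard hind
  set S := (Finset.range (n - 1)).erase t with hS
  have hScard : S.card = n - 2 := by
    rw [hS, Finset.card_erase_of_mem (by simp; omega)]; simp; omega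
  let Q := {x // x ∈ S}
  let p : Q → ℕ := fun k => k.1
  have hp : Function.Injective p := Subtype.val_injective
  have hpn : ∀ k, p k < n - 1 := fun k => by
    have := k.2; simp only [hS, Finset.mem_erase, Finset.mem_range] at this; exact this.2
  have hpt : ∀ k, p k ≠ t := fun k => by
    have := k.2; simp only [hS, Finset.mem_erase, Finset.mem_range] at this; exact this.1
  let r : Q → ℕ := fun k => if p k < b then p k else p k + 1
  let q : Q → ℕ := fun k => if a ≤ p k ∧ p k < t then p k + 1 else p k
  have hrn : ∀ k, r k < n := fun k => by
    have := hpn k; simp only [r]; split_ifs <;> omega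
  have hqn : ∀ k, q k < n - 1 := fun k => by
    have := hpn k; simp only [q]; split_ifs <;> omega
  have hrinj : Function.Injective r := by
    intro x y h
    apply hp
    simp only [r] at h
    split_ifs at h <;> omega
  have hqinj : Function.Injective q := by
    intro x y h
    apply hp
    have := hpt x
    have := hpt y
    simp only [q] at h
    split_ifs at h <;> omega
  have hQ : Fintype.card Q = n - 2 := by
    rw [← hScard]; exact Fintype.card_coe S
  have hmem := det_mem_minorsIdeal K hQ (fun k => c (r k)) (fun k => c (q k))
    (fun x y h => hrinj ((hc.eq_lt (hrn x) (hrn y)).1 h))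
    (fun x y h => hqinj ((hc.eq_lt (by have := hqn x; omega) (by have := hqn y; omega)).1 h))
  have hU : ∀ x y, x < n → y < n - 1 → s(c x, c y) ∈ Dset n ∪ Uset n →
      x = y ∨ x = y + 1 ∨ y = x + 1 ∨ (x = n - 1 ∧ y = 0) := by
    intro x y hx hy h
    rcases h with h | h
    · obtain ⟨z, hz, e⟩ := (hc.dmem_lt _).1 h
      left
      rw [Sym2.eq_iff] at e
      rw [← hc.eq_lt hx (by omega)]
      rcases e with ⟨e1, e2⟩ | ⟨e1, e2⟩ <;> exact e1.trans e2.symm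
    · obtain ⟨z, hz, e⟩ := (hc.umem_lt _).1 h
      rw [Sym2.eq_iff] at e
      have hz1 : c (z + 1) = c (if z + 1 = n then 0 else z + 1) := by
        split_ifs with h
        · rw [h, ← hc.modc n, Nat.mod_self]
        · rfl
      rw [hz1, hc.eq_lt hx hz, hc.eq_lt (by omega) hz,
        hc.eq_lt hx (by split_ifs <;> omega), hc.eq_lt (show y < n by omega) (by split_ifs <;> omega)] at e
      split_ifs at e <;> omega
  have hdiagrank : ∀ x, rank s(c x, c x) < n := fun x => rank_D hrank _
  have hlead := det_leading (K := K) (rank := rank) (fun k => c (r k)) (fun k => c (q k)) (by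
    intro σ hσ
    by_cases hall : ∀ k, s(c (r (σ k)), c (q k)) ∈ Dset n ∪ Uset n
    · -- all entries in D ∪ U
      have hfix := perm_core n a t b hat htb hbn p hp hpn hpt r q (fun k => rfl) (fun k => rfl) σ
        (fun k => hU _ _ (hrn _) (hqn _) (hall k))
      refine degRevLex_of_high hrank.1 Finset.univ
        (Finset.univ.filter fun k => ¬ ((a ≤ p k ∧ p k < t) ∨ b ≤ p k)) (Finset.subset_univ _)
        _ _ n ?_ ?_ ?_
      · intro k _ hk
        simp only [Finset.mem_filter, Finset.mem_univ, true_and, not_not] at hk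
        rw [hfix k hk]
      · intro k hk
        simp only [Finset.mem_filter, Finset.mem_univ, true_and] at hk
        have h1 : r k = p k := by simp only [r]; rw [if_pos (by omega)]
        have h2 : q k = p k := by simp only [q]; rw [if_neg (by omega)]
        rw [h1, h2]; exact hdiagrank _
      · obtain ⟨k, hk⟩ : ∃ k, σ k ≠ k := by
          by_contra hcon
          push Not at hcon
          exact hσ (Equiv.ext hcon)
        have hkd : ¬ ((a ≤ p k ∧ p k < t) ∨ b ≤ p k) := fun h => hk (hfix k h)
        have hskd : ¬ ((a ≤ p (σ k) ∧ p (σ k) < t) ∨ b ≤ p (σ k)) := by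
          intro h
          exact hk (σ.injective (hfix _ h))
        refine ⟨k, by simpa using hkd, ?_⟩
        have h1 : r (σ k) = p (σ k) := by simp only [r]; rw [if_pos (by omega)]
        have h2 : q k = p k := by simp only [q]; rw [if_neg (by omega)]
        apply rank_nondiag hn hrank
        rw [h1, h2, Ne, hc.eq_lt (by have := hpn (σ k); omega) (by have := hpn k; omega)]
        exact fun h => hk (hp h)
    · push Not at hall
      obtain ⟨k, hk⟩ := hall
      refine degRevLex_of_high hrank.1 Finset.univ Finset.univ (Finset.subset_univ _)
        _ _ (2 * n) ?_ ?_ ?_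
      · intro k _ hk; exact absurd (Finset.mem_univ k) hk
      · intro k _
        have : s(c (r k), c (q k)) ∈ N := by
          rw [hN]
          exact Finset.mem_image.2 ⟨k.1, k.2, rfl⟩
        rcases hNs this with ⟨i, hi⟩ | h
        · have := rank_D hrank i
          rw [← hi] at this; omega
        · exact (rank_U hn hrank h).2
      · exact ⟨k, Finset.mem_univ _, rank_rest hrank hk⟩)
  have hprod : (∏ v ∈ N, X v : MvPolynomial (Sym2 (Fin n)) K) =
      monomial (∑ k : Q, Finsupp.single s(c (r k), c (q k)) 1) 1 := by
    rw [MvPolynomial.monomial_sum_one]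
    symm
    refine Finset.prod_bij (fun k _ => s(c (r k), c (q k))) ?_ ?_ ?_ ?_
    · intro k _
      rw [hN]
      exact Finset.mem_image.2 ⟨k.1, k.2, rfl⟩
    · have hcc : Set.InjOn (fun p => s(c (if p < b then p else p + 1), c (if a ≤ p ∧ p < t then p + 1 else p))) (S : Set ℕ) := by
        rw [← Finset.card_image_iff, ← hN, hcard, hScard]
      intro k _ k' _ h
      exact Subtype.ext (hcc k.2 k'.2 h)
    · intro v hv
      rw [hN] at hv
      obtain ⟨x, hx, rfl⟩ := Finset.mem_image.1 hv
      exact ⟨⟨x, hx⟩, Finset.mem_univ _, rfl⟩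
    · intro k _
      rfl
  refine Ideal.subset_span ⟨_, hmem, ?_, _, hlead, hprod⟩
  intro h0
  have := hlead.1
  rw [h0] at this
  simp at this


/-- there is an alternating (in parity) sequence of length `k` in `C ∩ [a,b)`, starting with the
parity of `a`. -/
def AltSeq (C : ℕ → Prop) (b : ℕ) : ℕ → ℕ → Prop
  | 0, _ => True
  | k + 1, a => ∃ q, a ≤ q ∧ q < b ∧ q % 2 = a % 2 ∧ C q ∧ AltSeq C b k (q + 1)

theorem card_parity (a b : ℕ) : b ≤ a + 2 * ((Finset.Ico a b).filter (fun j => j % 2 = a % 2)).card := by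
  have key : ∀ m a, m ≤ 2 * ((Finset.Ico a (a + m)).filter (fun j => j % 2 = a % 2)).card := by
    intro m
    induction m using Nat.strong_induction_on with
    | _ m ih =>
      intro a
      rcases m with _ | _ | m
      · omega
      · have : a ∈ (Finset.Ico a (a + 1)).filter (fun j => j % 2 = a % 2) := by simp
        have := Finset.card_pos.2 ⟨a, this⟩
        simp only [zero_add] 
        omega
      · have h := ih m (by omega) (a + 2)
        have hsub : insert a ((Finset.Ico (a + 2) (a + 2 + m)).filter (fun j => j % 2 = (a + 2) % 2)) ⊆
            (Finset.Ico a (a + (m + 1 + 1))).filter (fun j => j % 2 = a % 2) := by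
          intro x hx
          simp only [Finset.mem_insert, Finset.mem_filter, Finset.mem_Ico] at hx ⊢
          omega
        have hc := Finset.card_le_card hsub
        rw [Finset.card_insert_of_notMem (by simp)] at hc
        omega
  by_cases h : a ≤ b
  · have := key (b - a) a
    rw [show a + (b - a) = b by omega] at this
    omega
  · omega

theorem greedy (C : ℕ → Prop) (b : ℕ) : ∀ k a, a ≤ b → ¬ AltSeq C b k a →
    ∃ N : Finset ℕ, (∀ j ∈ N, a ≤ j ∧ j < b ∧ ¬ C j) ∧ (∀ j ∈ N, j + 1 ∉ N) ∧
      b + 1 ≤ a + 2 * N.card + k := by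
  classical
  intro k
  induction k with
  | zero => intro a _ h; exact absurd trivial h
  | succ k ih =>
    intro a hab h
    by_cases hex : ∃ q, a ≤ q ∧ q < b ∧ q % 2 = a % 2 ∧ C q
    · set q := Nat.find hex with hq
      obtain ⟨h1, h2, h3, h4⟩ := Nat.find_spec hex
      rw [← hq] at h1 h2 h3 h4
      have hmin : ∀ j, j < q → a ≤ j → j % 2 = a % 2 → ¬ C j := by
        intro j hj haj hpar hC
        exact Nat.find_min hex hj ⟨haj, by omega, hpar, hC⟩
      obtain ⟨N, hN1, hN2, hN3⟩ := ih (q + 1) (by omega) (fun h' => h ⟨q, h1, h2, h3, h4, h'⟩)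
      refine ⟨(Finset.Ico a q).filter (fun j => j % 2 = a % 2) ∪ N, ?_, ?_, ?_⟩
      · intro j hj
        simp only [Finset.mem_union, Finset.mem_filter, Finset.mem_Ico] at hj
        rcases hj with ⟨⟨h5, h6⟩, h7⟩ | hj
        · exact ⟨h5, by omega, hmin j h6 h5 h7⟩
        · have := hN1 j hj
          exact ⟨by omega, this.2.1, this.2.2⟩
      · intro j hj hj1
        simp only [Finset.mem_union, Finset.mem_filter, Finset.mem_Ico] at hj hj1
        rcases hj with ⟨⟨h5, h6⟩, h7⟩ | hj
        · rcases hj1 with ⟨⟨h8, h9⟩, h10⟩ | hj1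
          · omega
          · have := hN1 _ hj1; omega
        · rcases hj1 with ⟨⟨h8, h9⟩, h10⟩ | hj1
          · have := hN1 _ hj; omega
          · exact hN2 j hj hj1
      · rw [Finset.card_union_of_disjoint]
        · have := card_parity a q
          omega
        · rw [Finset.disjoint_left]
          intro j hj hj'
          have := hN1 j hj'
          simp only [Finset.mem_filter, Finset.mem_Ico] at hj
          omega
    · push Not at hex
      refine ⟨(Finset.Ico a b).filter (fun j => j % 2 = a % 2), ?_, ?_, ?_⟩
      · intro j hj
        simp only [Finset.mem_filter, Finset.mem_Ico] at hj
        exact ⟨hj.1.1, hj.1.2, hex j hj.1.1 hj.1.2 hj.2⟩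
      · intro j hj hj1
        simp only [Finset.mem_filter, Finset.mem_Ico] at hj hj1
        omega
      · have := card_parity a b
        omega

/-- the vertices of the `2n`-cycle. -/
def vtx {n : ℕ} (c : ℕ → Fin n) (j : ℕ) : Sym2 (Fin n) :=
  if j % 2 = 0 then s(c (j / 2), c (j / 2)) else s(c (j / 2), c (j / 2 + 1))

theorem vtx_even {n : ℕ} (c : ℕ → Fin n) (p : ℕ) : vtx c (2 * p) = s(c p, c p) := by
  simp [vtx]

theorem vtx_odd {n : ℕ} (c : ℕ → Fin n) (p : ℕ) : vtx c (2 * p + 1) = s(c p, c (p + 1)) := by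
  have h1 : (2 * p + 1) / 2 = p := by omega
  have h2 : ¬ ((2 * p + 1) % 2 = 0) := by omega
  simp [vtx, h1]

/-- congruence in a window. -/
theorem window {n a b k : ℕ} (h : a % n = b % n) (h1 : a < b + n) (h2 : b < a + n) (_hk : k = n) :
    a = b := by
  rcases le_total a b with h3 | h3
  · have := (Nat.modEq_iff_dvd' h3).1 h
    rcases Nat.eq_zero_or_pos (b - a) with h4 | h4
    · omega
    · have := Nat.le_of_dvd h4 this; omega
  · have := (Nat.modEq_iff_dvd' h3).1 h.symm
    rcases Nat.eq_zero_or_pos (a - b) with h4 | h4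
    · omega
    · have := Nat.le_of_dvd h4 this; omega

theorem vtx_inj {n : ℕ} (hn : 4 ≤ n) {c : ℕ → Fin n} (hc : IsEnum n c) {i j : ℕ}
    (hij : i < j + 2 * n) (hji : j < i + 2 * n) (h : vtx c i = vtx c j) : i = j := by
  rcases Nat.even_or_odd' i with ⟨p, rfl | rfl⟩ <;> rcases Nat.even_or_odd' j with ⟨q, rfl | rfl⟩
  · rw [vtx_even, vtx_even, Sym2.eq_iff] at h
    have h1 : c p = c q := by tauto
    rw [hc.inj] at h1
    have := window h1 (by omega) (by omega) rfl
    omega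
  · rw [vtx_even, vtx_odd, Sym2.eq_iff] at h
    exfalso
    apply hc.ne_succ (by omega) q
    rcases h with ⟨e1, e2⟩ | ⟨e1, e2⟩
    · exact e1.symm.trans e2
    · exact e2.symm.trans e1
  · rw [vtx_even, vtx_odd, Sym2.eq_iff] at h
    exfalso
    apply hc.ne_succ (by omega) p
    rcases h with ⟨e1, e2⟩ | ⟨e1, e2⟩ <;> exact e1.trans e2.symm
  · rw [vtx_odd, vtx_odd, Sym2.eq_iff] at h
    rcases h with ⟨e1, e2⟩ | ⟨e1, e2⟩
    · rw [hc.inj] at e1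
      have := window e1 (by omega) (by omega) rfl
      omega
    · exfalso
      rw [hc.inj] at e1 e2
      have e3 : q + 2 ≡ q [MOD n] := by
        have := Nat.ModEq.add_right 1 (show p ≡ q + 1 [MOD n] from e1)
        exact this.symm.trans e2
      have e4 : 2 ≡ 0 [MOD n] := Nat.ModEq.add_left_cancel' q e3
      rw [Nat.ModEq, Nat.mod_eq_of_lt (by omega), Nat.zero_mod] at e4
      omega

theorem vtx_mem {n : ℕ} {c : ℕ → Fin n} (hc : IsEnum n c) (j : ℕ) :
    vtx c j ∈ Dset n ∪ Uset n := by
  rcases Nat.even_or_odd' j with ⟨p, rfl | rfl⟩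
  · left; rw [vtx_even]; exact ⟨_, rfl⟩
  · right; rw [vtx_odd, hc.umem]; exact ⟨p, rfl⟩

theorem vtx_adj {n : ℕ} (hn : 4 ≤ n) {c : ℕ → Fin n} (hc : IsEnum n c) {i j q : ℕ}
    (hi : q + 1 ≤ i ∧ i < q + 2 * n) (hj : q + 1 ≤ j ∧ j < q + 2 * n)
    (h : ∃ x : Fin n, vtx c i = s(x, x) ∧ vtx c j ∈ Uset n ∧ ∃ y z : Fin n, vtx c j = s(y, z) ∧
      (x = y ∨ x = z)) : i + 1 = j ∨ j + 1 = i := by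
  obtain ⟨x, h1, h2, y, z, h3, h4⟩ := h
  have hi2 : ∃ p, i = 2 * p := by
    rcases Nat.even_or_odd' i with ⟨p, rfl | rfl⟩
    · exact ⟨p, rfl⟩
    · exfalso
      rw [vtx_odd, Sym2.eq_iff] at h1
      apply hc.ne_succ (by omega) p
      rcases h1 with ⟨e1, e2⟩ | ⟨e1, e2⟩ <;> exact e1.trans e2.symm
  obtain ⟨p, rfl⟩ := hi2
  have hj2 : ∃ p, j = 2 * p + 1 := by
    rcases Nat.even_or_odd' j with ⟨p, rfl | rfl⟩
    · exfalso
      obtain ⟨r, hr⟩ := (hc.umem _).1 h2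
      rw [vtx_even, Sym2.eq_iff] at hr
      apply hc.ne_succ (by omega) r
      rcases hr with ⟨e1, e2⟩ | ⟨e1, e2⟩
      · exact e1.symm.trans e2
      · exact e2.symm.trans e1
    · exact ⟨p, rfl⟩
  obtain ⟨r, rfl⟩ := hj2
  rw [vtx_even] at h1
  rw [vtx_odd] at h3
  have hx : x = c p := by
    rw [Sym2.eq_iff] at h1
    rcases h1 with ⟨e1, e2⟩ | ⟨e1, e2⟩ <;> exact e1.symm
  subst hx
  have h5 : c p = c r ∨ c p = c (r + 1) := by
    rw [Sym2.eq_iff] at h3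
    rcases h3 with ⟨e1, e2⟩ | ⟨e1, e2⟩ <;> rw [e1, e2] <;> tauto
  rcases h5 with h5 | h5 <;> rw [hc.inj] at h5 <;>
    have := window h5 (by omega) (by omega) rfl <;> omega

/-- the set of allowed monomials. -/
def goodSet (n : ℕ) (N : Finset (Sym2 (Fin n))) : Prop :=
  ↑N ⊆ Dset n ∪ Uset n ∧ N.card = n - 2 ∧ (∀ v ∈ N, ∀ w ∈ N, ¬ GAdj n v w)

theorem good_of_window {n : ℕ} (hn : 4 ≤ n) {c : ℕ → Fin n} (hc : IsEnum n c) (q : ℕ)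
    (M : Finset ℕ) (hM : ∀ j ∈ M, q + 1 ≤ j ∧ j < q + 2 * n) (hM2 : ∀ j ∈ M, j + 1 ∉ M)
    (hcard : n - 2 ≤ M.card) :
    ∃ N, goodSet n N ∧ ∀ v ∈ N, ∃ j ∈ M, v = vtx c j := by
  classical
  obtain ⟨M', hM', hM'c⟩ := Finset.exists_subset_card_eq hcard
  have hadj : ∀ v ∈ M'.image (vtx c), ∀ w ∈ M'.image (vtx c),
      ¬ (∃ x : Fin n, v = s(x, x) ∧ w ∈ Uset n ∧ ∃ y z : Fin n, w = s(y, z) ∧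
      (x = y ∨ x = z)) := by
    intro v hv w hw h
    obtain ⟨i, hi, rfl⟩ := Finset.mem_image.1 hv
    obtain ⟨j, hj, rfl⟩ := Finset.mem_image.1 hw
    rcases vtx_adj hn hc (hM i (hM' hi)) (hM j (hM' hj)) h with h' | h'
    · exact hM2 i (hM' hi) (h' ▸ hM' hj)
    · exact hM2 j (hM' hj) (h' ▸ hM' hi)
  refine ⟨M'.image (vtx c), ⟨?_, ?_, ?_⟩, ?_⟩
  · intro v hv
    obtain ⟨j, _, rfl⟩ := Finset.mem_image.1 (Finset.mem_coe.1 hv)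
    exact vtx_mem hc j
  · rw [Finset.card_image_of_injOn, hM'c]
    intro i hi j hj h
    have h1 := hM i (hM' hi)
    have h2 := hM j (hM' hj)
    exact vtx_inj hn hc (by omega) (by omega) h
  · intro v hv w hw h
    rcases h with h | h
    · exact hadj v hv w hw h
    · exact hadj w hw v hv h
  · intro v hv
    obtain ⟨j, hj, rfl⟩ := Finset.mem_image.1 hv
    exact ⟨j, hM' hj, rfl⟩

/-- Either a good set avoids `Z`, or there are six alternating vertices in `Z`. -/
theorem six_of_no_good {n : ℕ} (hn : 4 ≤ n) (Z : Sym2 (Fin n) → Prop)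
    (h : ∀ N, goodSet n N → ∃ v ∈ N, Z v) :
    ∃ c, IsEnum n c ∧ ∃ D1 E1 D2 E2 D3 : ℕ, D1 ≤ E1 ∧ E1 < D2 ∧ D2 ≤ E2 ∧ E2 < D3 ∧ D3 ≤ n - 1 ∧
      Z s(c D1, c D1) ∧ Z s(c D2, c D2) ∧ Z s(c D3, c D3) ∧
      Z s(c E1, c (E1 + 1)) ∧ Z s(c E2, c (E2 + 1)) ∧ Z s(c (n - 1), c 0) := by
  classical
  obtain ⟨c, hc⟩ := exists_enum n hn
  have noM : ∀ q, ∀ M : Finset ℕ, (∀ j ∈ M, q + 1 ≤ j ∧ j < q + 2 * n) → (∀ j ∈ M, j + 1 ∉ M) →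
      n - 2 ≤ M.card → (∀ j ∈ M, ¬ Z (vtx c j)) → False := by
    intro q M h1 h2 h3 h4
    obtain ⟨N, hN, hN2⟩ := good_of_window hn hc q M h1 h2 h3
    obtain ⟨v, hv, hZ⟩ := h N hN
    obtain ⟨j, hj, rfl⟩ := hN2 v hv
    exact h4 j hj hZ
  have h1 : ∃ p, Z (vtx c (2 * p)) := by
    by_contra hcon
    push Not at hcon
    refine noM 1 ((Finset.Ico 2 (2 * n + 1)).filter (fun j => j % 2 = 2 % 2)) ?_ ?_ ?_ ?_
    · intro j hj
      simp only [Finset.mem_filter, Finset.mem_Ico] at hj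
      omega
    · intro j hj hj'
      simp only [Finset.mem_filter, Finset.mem_Ico] at hj hj'
      omega
    · have := card_parity 2 (2 * n + 1)
      omega
    · intro j hj
      simp only [Finset.mem_filter, Finset.mem_Ico] at hj
      have := hcon (j / 2)
      rwa [show 2 * (j / 2) = j by omega] at this
  obtain ⟨D1, hD1⟩ := h1
  have h2 : AltSeq (fun j => Z (vtx c j)) (2 * D1 + 2 * n) 5 (2 * D1 + 1) := by
    by_contra hcon
    obtain ⟨M, hM1, hM2, hM3⟩ := greedy _ _ 5 (2 * D1 + 1) (by omega) hcon
    exact noM (2 * D1) M (fun j hj => ⟨(hM1 j hj).1, (hM1 j hj).2.1⟩) hM2 (by omega)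
      (fun j hj => (hM1 j hj).2.2)
  obtain ⟨q2, a2, b2, p2, Z2, q3, a3, b3, p3, Z3, q4, a4, b4, p4, Z4, q5, a5, b5, p5, Z5, q6, a6, b6,
    p6, Z6, -⟩ := h2
  obtain ⟨E1, rfl⟩ : ∃ E, q2 = 2 * E + 1 := ⟨q2 / 2, by omega⟩
  obtain ⟨D2, rfl⟩ : ∃ E, q3 = 2 * E := ⟨q3 / 2, by omega⟩
  obtain ⟨E2, rfl⟩ : ∃ E, q4 = 2 * E + 1 := ⟨q4 / 2, by omega⟩
  obtain ⟨D3, rfl⟩ : ∃ E, q5 = 2 * E := ⟨q5 / 2, by omega⟩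
  obtain ⟨E3, rfl⟩ : ∃ E, q6 = 2 * E + 1 := ⟨q6 / 2, by omega⟩
  simp only [vtx_even, vtx_odd] at *
  have e : ∀ x, D1 ≤ x → c (x + (n - E3 % n - 1) + (E3 + 1)) = c x := by
    intro x hx
    rw [hc.inj]
    have hm := Nat.div_add_mod E3 n
    have hl := Nat.mod_lt E3 (show 0 < n by omega)
    rw [show x + (n - E3 % n - 1) + (E3 + 1) = x + n + n * (E3 / n) by omega]
    simp
  have e0 : ∀ x, E3 < x + n → c (x + n - (E3 + 1) + (E3 + 1)) = c x := by
    intro x hx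
    rw [show x + n - (E3 + 1) + (E3 + 1) = x + n by omega, hc.periodic]
  refine ⟨_, hc.rot (E3 + 1), D1 + n - (E3 + 1), E1 + n - (E3 + 1), D2 + n - (E3 + 1),
    E2 + n - (E3 + 1), D3 + n - (E3 + 1), by omega, by omega, by omega, by omega, by omega, ?_⟩
  have f1 : ∀ x, E3 < x + n → c (x + n - (E3 + 1) + 1 + (E3 + 1)) = c (x + 1) := by
    intro x hx
    rw [show x + n - (E3 + 1) + 1 + (E3 + 1) = x + 1 + n by omega, hc.periodic]
  have f2 : c (n - 1 + (E3 + 1)) = c E3 := by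
    rw [show n - 1 + (E3 + 1) = E3 + n by omega, hc.periodic]
  rw [e0 D1 (by omega), e0 D2 (by omega), e0 D3 (by omega), e0 E1 (by omega), e0 E2 (by omega),
    f1 E1 (by omega), f1 E2 (by omega), f2, zero_add]
  exact ⟨hD1, Z3, Z5, Z2, Z4, Z6⟩


theorem det_mul_thin {R m J : Type*} [CommRing R] [Fintype m] [DecidableEq m] [Fintype J]
    [DecidableEq J] (A : Matrix m J R) (B : Matrix J m R) (h : Fintype.card J < Fintype.card m) :
    (A * B).det = 0 := by
  obtain ⟨e⟩ := Function.Embedding.nonempty_of_card_le h.le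
  let P : Matrix J m R := Matrix.of fun j l => if e j = l then 1 else 0
  have hPP : P * P.transpose = 1 := by
    ext i j
    simp [P, Matrix.mul_apply, Matrix.one_apply, e.injective.eq_iff, eq_comm]
  have h1 : A * B = (A * P) * (P.transpose * B) := by
    rw [Matrix.mul_assoc, ← Matrix.mul_assoc P, hPP, Matrix.one_mul]
  obtain ⟨l, hl⟩ : ∃ l, ∀ j, e j ≠ l := by
    by_contra hcon
    push Not at hcon
    have := Fintype.card_le_of_surjective e hcon
    omega
  rw [h1, Matrix.det_mul, Matrix.det_eq_zero_of_column_eq_zero l, zero_mul]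
  intro i
  simp [P, Matrix.mul_apply, hl]

theorem det_of_kernel {R ι : Type*} [CommRing R] [Fintype ι] [DecidableEq ι] {m : ℕ}
    (M : Matrix ι ι R) (d : Fin 3 → ι) (hd : Function.Injective d) (K : Matrix ι (Fin 3) R)
    (hK : ∀ i j, K (d i) j = if i = j then 1 else 0) (hMK : M * K = 0)
    (hm : Fintype.card ι < m + 3) (a b : Fin m → ι) : (M.submatrix a b).det = 0 := by
  classical
  let P : Matrix (Fin 3) ι R := Matrix.of fun i w => if d i = w then 1 else 0
  let Z : Matrix ι ι R := 1 - K * P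
  have hMZ : M * Z = M := by
    simp only [Z]
    rw [Matrix.mul_sub, ← Matrix.mul_assoc, hMK]; simp
  have hZ : ∀ i w, Z (d i) w = 0 := by
    intro i w
    have : ∑ j, (if i = j then (1 : R) else 0) * (if d j = w then 1 else 0) =
        if d i = w then 1 else 0 := by
      rw [Finset.sum_eq_single i] <;> simp +contextual [eq_comm]
    simp only [Z, P, Matrix.mul_apply, Matrix.one_apply, hK, Matrix.sub_apply, Matrix.of_apply,
      this, sub_self]
  let J := {p : ι // ∀ i, d i ≠ p}
  have hJ : Fintype.card J < m := by
    have h1 : Fintype.card J + Fintype.card (Fin 3) ≤ Fintype.card ι := by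
      rw [← Fintype.card_sum]
      refine Fintype.card_le_of_injective (Sum.elim (fun j : J => j.1) d) ?_
      refine Function.Injective.sumElim Subtype.val_injective hd ?_
      intro j i h
      exact j.2 i h.symm
    simp only [Fintype.card_fin] at h1
    omega
  have hfac : M.submatrix a b = M.submatrix a (Subtype.val : J → ι) *
      Z.submatrix (Subtype.val : J → ι) b := by
    ext k l
    rw [Matrix.submatrix_apply, ← hMZ, Matrix.mul_apply, Matrix.mul_apply]
    simp only [Matrix.submatrix_apply, hMZ]
    symm
    refine Fintype.sum_of_injective (Subtype.val : J → ι) Subtype.val_injective _ _ ?_ ?_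
    · intro p hp
      have : ∃ i, d i = p := by
        by_contra hcon
        push Not at hcon
        exact hp ⟨⟨p, hcon⟩, rfl⟩
      obtain ⟨i, rfl⟩ := this
      rw [hZ, mul_zero]
    · intro j; rfl
  rw [hfac]
  exact det_mul_thin _ _ (by simpa using hJ)

theorem solve_lemma {ι F : Type*} [Fintype ι] [DecidableEq ι] [Field F]
    (A : Matrix ι ι F) (hA : A.transpose = A) (d : Fin 3 → ι) (hd : Function.Injective d)
    (K0 : Matrix ι (Fin 3) F) (hK0 : ∀ i j, K0 (d i) j = if i = j then 1 else 0)
    (hAK : A * K0 = 0)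
    (hP : ∀ κ : ι → F, (∀ i, κ (d i) = 0) → A.mulVec κ = 0 → κ = 0)
    (W : ι → F) (hW : K0.transpose.mulVec W = 0) :
    ∃ κ : ι → F, (∀ i, κ (d i) = 0) ∧ A.mulVec κ = W := by
  classical
  have key : ∀ y : ι → F, (∀ p, (∀ i, d i ≠ p) → y p = 0) → K0.transpose.mulVec y = 0 → y = 0 := by
    intro y hy hy2
    funext p
    by_cases hp : ∀ i, d i ≠ p
    · exact hy p hp
    · push Not at hp
      obtain ⟨i, rfl⟩ := hp
      have := congrFun hy2 i
      simp only [Matrix.mulVec, dotProduct, Matrix.transpose_apply, Pi.zero_apply] at this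
      rw [Finset.sum_eq_single (d i)] at this
      · simpa [hK0] using this
      · intro q _ hq
        by_cases hp : ∀ i, d i ≠ q
        · rw [hy q hp, mul_zero]
        · push Not at hp
          obtain ⟨j, rfl⟩ := hp
          have : j ≠ i := fun h => hq (by rw [h])
          simp [hK0, this]
      · simp
  have hKA : ∀ κ : ι → F, K0.transpose.mulVec (A.mulVec κ) = 0 := by
    intro κ
    have : K0.transpose * A = 0 := by
      rw [← hA, ← Matrix.transpose_mul, hAK]; simp
    rw [Matrix.mulVec_mulVec, this]; simp
  let T : (ι → F) →ₗ[F] (ι → F) :=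
    { toFun := fun κ p => if ∀ i, d i ≠ p then A.mulVec κ p else κ p
      map_add' := by
        intro x y; funext p; simp only [Matrix.mulVec_add, Pi.add_apply]; split_ifs <;> rfl
      map_smul' := by
        intro r x; funext p
        simp only [Matrix.mulVec_smul, Pi.smul_apply, RingHom.id_apply]; split_ifs <;> rfl }
  have hTd : ∀ κ i, T κ (d i) = κ (d i) := by
    intro κ i
    show (if _ then _ else _) = _
    rw [if_neg (by push Not; exact ⟨i, rfl⟩)]
  have hTJ : ∀ κ p, (∀ i, d i ≠ p) → T κ p = A.mulVec κ p := by
    intro κ p hp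
    show (if _ then _ else _) = _
    rw [if_pos hp]
  have hinj : Function.Injective T := by
    rw [injective_iff_map_eq_zero]
    intro κ hκ
    refine hP κ (fun i => by rw [← hTd κ, hκ]; rfl) (key _ (fun p hp => ?_) (hKA κ))
    rw [← hTJ κ p hp, hκ]; rfl
  have hsurj := LinearMap.injective_iff_surjective.mp hinj
  obtain ⟨κ, hκ⟩ := hsurj (fun p => if ∀ i, d i ≠ p then W p else 0)
  refine ⟨κ, fun i => ?_, ?_⟩
  · rw [← hTd κ, hκ]; exact if_neg (by push Not; exact ⟨i, rfl⟩)
  · rw [← sub_eq_zero]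
    apply key
    · intro p hp
      rw [Pi.sub_apply, ← hTJ κ p hp, hκ]; simp only [if_pos hp, sub_self]
    · rw [Matrix.mulVec_sub, hKA, hW, sub_zero]


/-- the symmetric matrix with given entries -/
def symM {ι R : Type*} (V : Sym2 ι → R) : Matrix ι ι R := Matrix.of fun p q => V s(p, q)

theorem symM_transpose {ι R : Type*} (V : Sym2 ι → R) : (symM V).transpose = symM V := by
  ext p q
  simp [symM, Sym2.eq_swap]

theorem hensel {ι F : Type*} [Fintype ι] [DecidableEq ι] [Field F]
    (A : Sym2 ι → F) (d : Fin 3 → ι) (hd : Function.Injective d)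
    (K0 : Matrix ι (Fin 3) F) (hK0 : ∀ i j, K0 (d i) j = if i = j then 1 else 0)
    (hAK : symM A * K0 = 0)
    (hP : ∀ κ : ι → F, (∀ i, κ (d i) = 0) → (symM A).mulVec κ = 0 → κ = 0)
    (six : Set (Sym2 ι))
    (hs : ∀ G : Matrix (Fin 3) (Fin 3) F, G.transpose = G → ∃ c : Sym2 ι → F,
      (∀ v, v ∉ six → c v = 0) ∧ K0.transpose * symM c * K0 = G)
    (B : Sym2 ι → Polynomial F) (hB : ∀ v, Polynomial.constantCoeff (B v) = A v) (N : ℕ) :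
    ∃ (X : Sym2 ι → Polynomial F) (K E : Matrix ι (Fin 3) (Polynomial F)),
      (∀ v, v ∉ six → X v = B v) ∧ (∀ v, Polynomial.constantCoeff (X v) = A v) ∧
      (∀ i j, K (d i) j = if i = j then 1 else 0) ∧
      (K.map Polynomial.constantCoeff = K0) ∧
      symM X * K = (Polynomial.X ^ (N + 1) : Polynomial F) • E := by
  have divX : ∀ H : Matrix ι (Fin 3) (Polynomial F), H.map Polynomial.constantCoeff = 0 →
      ∃ E : Matrix ι (Fin 3) (Polynomial F), H = (Polynomial.X : Polynomial F) • E := by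
    intro H hH
    have : ∀ p i, ∃ e, H p i = Polynomial.X * e := by
      intro p i
      have h1 := congrFun (congrFun hH p) i
      simp only [Matrix.map_apply, Matrix.zero_apply, Polynomial.constantCoeff_apply] at h1
      exact Polynomial.X_dvd_iff.mpr h1
    choose e he using this
    exact ⟨Matrix.of e, by ext1 p i; simp [he]⟩
  induction N with
  | zero =>
    have h1 : (K0.map Polynomial.C).map Polynomial.constantCoeff = K0 := by
      ext p i; simp
    have h2 : (symM B).map Polynomial.constantCoeff = symM A := by
      ext p q; simpa [symM] using hB s(p, q)
    obtain ⟨E, hE⟩ := divX (symM B * K0.map Polynomial.C) (by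
      rw [Matrix.map_mul, h1, h2, hAK])
    refine ⟨B, K0.map Polynomial.C, E, fun _ _ => rfl, hB, ?_, h1, by simpa using hE⟩
    intro i j
    simp only [Matrix.map_apply, hK0]
    split_ifs <;> simp
  | succ N ih =>
    obtain ⟨X, K, E, hXs, hXc, hKd, hKc, hXK⟩ := ih
    have hMc : (symM X).map Polynomial.constantCoeff = symM A := by
      ext p q; simpa [symM] using hXc s(p, q)
    set s : Polynomial F := Polynomial.X ^ (N + 1) with hsdef
    have hs0 : s ≠ 0 := pow_ne_zero _ Polynomial.X_ne_zero
    have hG : (K.transpose * E).transpose = K.transpose * E := by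
      have h1 : s • (K.transpose * E) = K.transpose * symM X * K := by
        rw [Matrix.mul_assoc, hXK, Matrix.mul_smul]
      have h2 : (s • (K.transpose * E)).transpose = s • (K.transpose * E) := by
        rw [h1, Matrix.transpose_mul, Matrix.transpose_mul, Matrix.transpose_transpose,
          symM_transpose, Matrix.mul_assoc]
      ext1 i j
      have h3 := congrFun (congrFun h2 i) j
      simp only [Matrix.transpose_apply, Matrix.smul_apply, smul_eq_mul] at h3
      exact mul_left_cancel₀ hs0 h3
    set E0 : Matrix ι (Fin 3) F := E.map Polynomial.constantCoeff with hE0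
    have hKt : (K.transpose).map Polynomial.constantCoeff = K0.transpose := by
      rw [← hKc]; rfl
    have hG0 : (K0.transpose * E0).transpose = K0.transpose * E0 := by
      have : (K.transpose * E).map Polynomial.constantCoeff = K0.transpose * E0 := by
        rw [Matrix.map_mul, hKt]
      rw [← this, ← Matrix.transpose_map, hG]
    obtain ⟨c, hcs, hc⟩ := hs (-(K0.transpose * E0)) (by rw [Matrix.transpose_neg, hG0])
    set W := E0 + symM c * K0 with hWdef
    have hW : K0.transpose * W = 0 := by
      rw [hWdef, Matrix.mul_add, ← Matrix.mul_assoc, hc, add_neg_cancel]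
    have hsol : ∀ i, ∃ κ : ι → F, (∀ i, κ (d i) = 0) ∧ (symM A).mulVec κ = fun p => - W p i := by
      intro i
      refine solve_lemma (symM A) (symM_transpose A) d hd K0 hK0 hAK hP _ ?_
      funext j
      have := congrFun (congrFun hW j) i
      simp only [Matrix.mul_apply, Matrix.zero_apply] at this
      simp only [Matrix.mulVec, dotProduct, mul_neg, Finset.sum_neg_distrib, this]
      simp
    choose κ hκd hκ using hsol
    let κm : Matrix ι (Fin 3) F := Matrix.of fun p i => κ i p
    have hκm : symM A * κm = -W := by
      ext p i
      exact congrFun (hκ i) p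
    let cC := (symM c).map Polynomial.C
    let κC := κm.map Polynomial.C
    let H := E + cC * K + symM X * κC + s • (cC * κC)
    have hH : H.map Polynomial.constantCoeff = 0 := by
      have e1 : cC.map Polynomial.constantCoeff = symM c := by ext; simp [cC]
      have e2 : κC.map Polynomial.constantCoeff = κm := by ext; simp [κC]
      have e3 : (s • (cC * κC)).map Polynomial.constantCoeff = 0 := by
        ext p i
        simp [hsdef]
      have : H.map Polynomial.constantCoeff = E0 + symM c * K0 + symM A * κm + 0 := by
        have e4 : (cC * K).map Polynomial.constantCoeff = symM c * K0 := by
          rw [Matrix.map_mul, e1, hKc]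
        have e5 : (symM X * κC).map Polynomial.constantCoeff = symM A * κm := by
          rw [Matrix.map_mul, e2, hMc]
        rw [← e3, ← e4, ← e5, hE0]
        ext p i
        simp only [H, Matrix.map_apply, Matrix.add_apply, map_add]
      rw [this, hκm, hWdef]; simp
    obtain ⟨E', hE'⟩ := divX H hH
    refine ⟨fun v => X v + s * Polynomial.C (c v), K + s • κC, E', ?_, ?_, ?_, ?_, ?_⟩
    · intro v hv
      simp [hcs v hv, hXs v hv]
    · intro v
      have := hXc v
      simp only [Polynomial.constantCoeff_apply] at this
      simp [hsdef, this]
    · intro i j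
      simp [κC, κm, hκd, hKd]
    · rw [← hKc]
      ext p i
      simp [hsdef]
    · have e : symM (fun v => X v + s * Polynomial.C (c v)) = symM X + s • cC := by
        ext1 p q
        simp [symM, cC]
      rw [e, Matrix.mul_add, Matrix.add_mul, Matrix.add_mul, hXK, pow_succ, ← smul_smul, ← hE']
      simp only [H, smul_add, Matrix.mul_smul, Matrix.smul_mul]
      abel

theorem aeval_minors_dvd {ι F : Type*} [Fintype ι] [DecidableEq ι] [Field F] {m : ℕ}
    (X : Sym2 ι → Polynomial F) (d : Fin 3 → ι) (hd : Function.Injective d)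
    (K E : Matrix ι (Fin 3) (Polynomial F))
    (hK : ∀ i j, K (d i) j = if i = j then 1 else 0) (s : Polynomial F)
    (hXK : symM X * K = s • E) (hm : Fintype.card ι < m + 3) (a b : Fin m → ι) :
    s ∣ ((symM X).submatrix a b).det := by
  rw [← Ideal.mem_span_singleton, ← Ideal.Quotient.eq_zero_iff_mem, RingHom.map_det]
  set φ := Ideal.Quotient.mk (Ideal.span {s}) with hφ
  have hs : φ s = 0 := by
    rw [hφ, Ideal.Quotient.eq_zero_iff_mem]; exact Ideal.mem_span_singleton_self s
  refine det_of_kernel ((symM X).map φ) d hd (K.map φ) ?_ ?_ hm a b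
  · intro i j
    simp only [Matrix.map_apply, hK]
    split_ifs <;> simp
  · rw [← Matrix.map_mul, hXK]
    ext p i
    simp [hs]


theorem stage_a (K : Type*) [Field K] (n : ℕ) (cut : ℕ → Prop) (Dp : ℕ → ℕ) (w g : ℕ → ℕ)
    (hwg : ∀ p q, w p < g q)
    (h1 : ∀ p, ¬ cut p → Dp (p + 1) = Dp p)
    (h2 : ∀ p, p < n → p < Dp p → ¬ cut p)
    (h3 : ∀ p, p + 1 < n → Dp (p + 1) < p + 1 → ¬ cut p) :
    ∃ u k a : ℕ → Polynomial K,
      (∀ p, k p ≠ 0) ∧ (∀ p, u p = 0 ↔ cut p) ∧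
      (a 0 * k 0 + u 0 * k 1 = 0) ∧
      (∀ p, a (p + 1) * k (p + 1) + u p * k p + u (p + 1) * k (p + 2) = 0) ∧
      (∀ p, ∃ y : Polynomial K, u p = Polynomial.X ^ (g p) * y ∧
        (cut p → y.coeff 0 = 0) ∧ (¬ cut p → y.coeff 0 = 1)) ∧
      (∀ p, p < n → ∃ y : Polynomial K, a p = Polynomial.X ^ (w p) * y ∧
        (p = Dp p → y.coeff 0 = 0) ∧ (p ≠ Dp p → y.coeff 0 = 1)) := by
  classical
  let h : ℕ → ℕ := fun p => if p ≤ Dp p then ∑ q ∈ Finset.Ico p (Dp p), (g q - w q)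
    else ∑ q ∈ Finset.Ico (Dp p) p, (g q - w (q + 1))
  let k : ℕ → Polynomial K := fun p => (-1) ^ p * Polynomial.X ^ (h p)
  let u : ℕ → Polynomial K := fun p => if cut p then 0 else Polynomial.X ^ (g p)
  let R : ℕ → Polynomial K := fun p => if cut p then 0 else
    if p < Dp p then Polynomial.X ^ (w p) else Polynomial.X ^ (2 * g p - w (p + 1))
  let L' : ℕ → Polynomial K := fun p => if cut p then 0 else
    if Dp p < p + 1 then Polynomial.X ^ (w (p + 1)) else Polynomial.X ^ (2 * g p - w p)
  let L : ℕ → Polynomial K := fun p => if p = 0 then 0 else L' (p - 1)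
  have hh1 : ∀ p, ¬ cut p → p < Dp p → h p = (g p - w p) + h (p + 1) := by
    intro p hc hp
    simp only [h]
    rw [h1 p hc, if_pos hp.le, if_pos (by omega), Finset.sum_eq_sum_Ico_succ_bot hp]
  have hh2 : ∀ p, ¬ cut p → Dp p ≤ p → h (p + 1) = h p + (g p - w (p + 1)) := by
    intro p hc hp
    simp only [h]
    rw [h1 p hc, if_neg (by omega), Finset.sum_Ico_succ_top hp]
    congr 1
    split_ifs with hq
    · have : p = Dp p := by omega
      rw [← this]; simp
    · rfl
  have hR : ∀ p, R p * k p + u p * k (p + 1) = 0 := by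
    intro p
    simp only [R, u, k]
    split_ifs with hc hp
    · simp
    · have e : w p + h p = g p + h (p + 1) := by
        have := hh1 p hc hp; have := hwg p p; omega
      have : (Polynomial.X : Polynomial K) ^ w p * Polynomial.X ^ h p =
        Polynomial.X ^ g p * Polynomial.X ^ h (p + 1) := by rw [← pow_add, ← pow_add, e]
      rw [pow_succ]
      linear_combination (-1) ^ p * this
    · have e : 2 * g p - w (p + 1) + h p = g p + h (p + 1) := by
        have := hh2 p hc (by omega); have := hwg (p + 1) p; omega
      have : (Polynomial.X : Polynomial K) ^ (2 * g p - w (p + 1)) * Polynomial.X ^ h p =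
        Polynomial.X ^ g p * Polynomial.X ^ h (p + 1) := by rw [← pow_add, ← pow_add, e]
      rw [pow_succ]
      linear_combination (-1) ^ p * this
  have hL : ∀ p, L' p * k (p + 1) + u p * k p = 0 := by
    intro p
    simp only [L', u, k]
    split_ifs with hc hp
    · simp
    · have e : w (p + 1) + h (p + 1) = g p + h p := by
        have := hh2 p hc (by omega); have := hwg (p + 1) p; omega
      have : (Polynomial.X : Polynomial K) ^ w (p + 1) * Polynomial.X ^ h (p + 1) =
        Polynomial.X ^ g p * Polynomial.X ^ h p := by rw [← pow_add, ← pow_add, e]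
      rw [pow_succ]
      linear_combination - (-1) ^ p * this
    · have e : 2 * g p - w p + h (p + 1) = g p + h p := by
        have := hh1 p hc (by omega); have := hwg p p; omega
      have : (Polynomial.X : Polynomial K) ^ (2 * g p - w p) * Polynomial.X ^ h (p + 1) =
        Polynomial.X ^ g p * Polynomial.X ^ h p := by rw [← pow_add, ← pow_add, e]
      rw [pow_succ]
      linear_combination - (-1) ^ p * this
  have hRy : ∀ p, p < n → ∃ y, R p = Polynomial.X ^ (w p) * y ∧
      y.coeff 0 = if p < Dp p then 1 else 0 := by
    intro p hpn
    simp only [R]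
    by_cases hp : p < Dp p
    · rw [if_neg (h2 p hpn hp)]; simp only [if_pos hp]
      exact ⟨1, by simp, by simp⟩
    · simp only [if_neg hp]
      split_ifs with hc
      · exact ⟨0, by simp, by simp⟩
      · have := hwg (p + 1) p
        have := hwg p p
        refine ⟨Polynomial.X ^ (2 * g p - w (p + 1) - w p), ?_, ?_⟩
        · rw [← pow_add]; congr 1; omega
        · rw [Polynomial.coeff_X_pow, if_neg (by omega)]
  have hLy : ∀ p, p < n → ∃ y, L p = Polynomial.X ^ (w p) * y ∧
      y.coeff 0 = if Dp p < p then 1 else 0 := by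
    intro p hpn
    rcases p with _ | p
    · exact ⟨0, by simp [L], by simp⟩
    simp only [L, L', Nat.add_sub_cancel, if_neg (Nat.succ_ne_zero p)]
    by_cases hp : Dp (p + 1) < p + 1
    · have hc := h3 p hpn hp
      rw [if_neg hc, ← h1 p hc]; simp only [if_pos hp]
      exact ⟨1, by simp, by simp⟩
    · simp only [if_neg hp]
      split_ifs with hc hq
      · exact ⟨0, by simp, by simp⟩
      · rw [h1 p hc] at hp; omega
      · have := hwg (p + 1) p
        have := hwg p p
        refine ⟨Polynomial.X ^ (2 * g p - w p - w (p + 1)), ?_, ?_⟩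
        · rw [← pow_add]; congr 1; omega
        · rw [Polynomial.coeff_X_pow, if_neg (by omega)]
  refine ⟨u, k, fun p => L p + R p, ?_, ?_, ?_, ?_, ?_, ?_⟩
  · intro p
    exact mul_ne_zero (pow_ne_zero _ (by simp)) (pow_ne_zero _ Polynomial.X_ne_zero)
  · intro p
    simp only [u]
    split_ifs with hc
    · simp [hc]
    · simp [hc]
  · have := hR 0
    simp only [L]
    simpa using this
  · intro p
    have e1 := hR (p + 1)
    have e2 := hL p
    have e3 : L (p + 1) = L' p := by simp [L]
    simp only [e3]
    linear_combination e1 + e2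
  · intro p
    refine ⟨if cut p then 0 else 1, ?_, ?_, ?_⟩
    · simp only [u]; split_ifs <;> simp
    · intro hc; simp [hc]
    · intro hc; simp [hc]
  · intro p hp
    obtain ⟨y1, e1, f1⟩ := hRy p hp
    obtain ⟨y2, e2, f2⟩ := hLy p hp
    refine ⟨y2 + y1, by simp only [e1, e2]; ring, ?_, ?_⟩
    · intro h
      rw [Polynomial.coeff_add, f1, f2, if_neg (by omega), if_neg (by omega), add_zero]
    · intro h
      rw [Polynomial.coeff_add, f1, f2]
      rcases lt_or_gt_of_ne h with h | h
      · rw [if_neg (by omega), if_pos h, zero_add]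
      · rw [if_pos (by omega), if_neg (by omega), add_zero]


/-- tridiagonal entries -/
def triF {F : Type*} [Zero F] (u a : ℕ → F) (p q : ℕ) : F :=
  if p = q then a p else if q = p + 1 then u p else if p = q + 1 then u q else 0

theorem triF_comm {F : Type*} [Zero F] (u a : ℕ → F) (p q : ℕ) : triF u a p q = triF u a q p := by
  unfold triF
  split_ifs <;> first | rfl | omega | (subst_vars; rfl)

/-- tridiagonal entries on unordered pairs -/
def triS {F : Type*} [Zero F] (n : ℕ) (u a : ℕ → F) : Sym2 (Fin n) → F :=
  Sym2.lift ⟨fun p q => triF u a p q, fun p q => triF_comm u a p q⟩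

theorem triS_mk {F : Type*} [Zero F] (n : ℕ) (u a : ℕ → F) (p q : Fin n) :
    triS n u a s(p, q) = triF u a p q := rfl

theorem sum_fin_one {F : Type*} [AddCommMonoid F] {n : ℕ} (x : ℕ) (f : ℕ → F) :
    ∑ q : Fin n, (if (q : ℕ) = x then f q else 0) = if x < n then f x else 0 := by
  split_ifs with h
  · rw [Finset.sum_eq_single ⟨x, h⟩]
    · simp
    · intro q _ hq
      rw [if_neg]; intro h'; exact hq (Fin.ext h')
    · simp
  · refine Finset.sum_eq_zero fun q _ => if_neg (by omega)

theorem row_sum {F : Type*} [Field F] {n : ℕ} (u a : ℕ → F) (f : ℕ → F) (hu : u (n - 1) = 0)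
    (p : Fin n) :
    ∑ q : Fin n, triS n u a s(p, q) * f q =
      a p * f p + (if (p : ℕ) = 0 then 0 else u (p - 1) * f (p - 1)) + u p * f (p + 1) := by
  have h1 : ∀ q : Fin n, triS n u a s(p, q) * f q = (if (q : ℕ) = p then a p * f q else 0) +
      (if (q : ℕ) = p + 1 then u p * f q else 0) +
      (if (q : ℕ) = p - 1 then (if (p : ℕ) = 0 then 0 else u q * f q) else 0) := by
    intro q
    rw [triS_mk]
    unfold triF
    split_ifs <;> first | omega | simp
  rw [Finset.sum_congr rfl fun q _ => h1 q, Finset.sum_add_distrib, Finset.sum_add_distrib,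
    sum_fin_one (p : ℕ) (fun q => a p * f q), sum_fin_one ((p : ℕ) + 1) (fun q => u p * f q),
    sum_fin_one ((p : ℕ) - 1) (fun q => if (p : ℕ) = 0 then 0 else u q * f q),
    if_pos p.2, if_pos (by omega : (p : ℕ) - 1 < n)]
  have : (if (p : ℕ) + 1 < n then u p * f (p + 1) else 0) = u p * f (p + 1) := by
    split_ifs with h
    · rfl
    · have : (p : ℕ) = n - 1 := by omega
      rw [this, hu, zero_mul]
  rw [this]
  ring

theorem spread (Z : ℕ → Prop) (a b : ℕ) (hab : a ≤ b) (h : ∀ p, a ≤ p → p < b → (Z p ↔ Z (p + 1))) :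
    Z a ↔ Z b := by
  induction b, hab using Nat.le_induction with
  | base => rfl
  | succ b hb ih =>
    rw [ih fun p h1 h2 => h p h1 (by omega)]
    exact h b hb (by omega)

/-- index of the arc -/
def arcIdx (E1 E2 p : ℕ) : Fin 3 := if p ≤ E1 then 0 else if p ≤ E2 then 1 else 2

theorem symM_add {ι R : Type*} [Add R] (V W : Sym2 ι → R) : symM (V + W) = symM V + symM W := rfl

theorem symM_single_diag {ι R : Type*} [DecidableEq ι] [AddCommMonoid R] (x : ι) (r : R) :
    symM (Pi.single s(x, x) r) = Matrix.single x x r := by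
  ext p q
  simp only [symM, Matrix.of_apply, Pi.single_apply, Matrix.single_apply, Sym2.eq_iff]
  congr 1
  simp only [eq_iff_iff]; tauto

theorem symM_single_off {ι R : Type*} [DecidableEq ι] [AddCommMonoid R] {x y : ι} (h : x ≠ y)
    (r : R) :
    symM (Pi.single s(x, y) r) = Matrix.single x y r + Matrix.single y x r := by
  ext p q
  simp only [symM, Matrix.of_apply, Pi.single_apply, Matrix.single_apply, Matrix.add_apply,
    Sym2.eq_iff]
  by_cases h1 : p = x <;> by_cases h2 : q = y <;> by_cases h3 : p = y <;> by_cases h4 : q = x <;>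
    simp_all <;> grind

theorem sandwich {ι F : Type*} [Fintype ι] [DecidableEq ι] [Field F] (K0 : Matrix ι (Fin 3) F)
    (x y : ι) (r : F) (i j : Fin 3) :
    (K0.transpose * Matrix.single x y r * K0) i j = K0 x i * r * K0 y j := by
  rw [Matrix.mul_apply, Finset.sum_eq_single y]
  · rw [Matrix.mul_single_apply_same]; rfl
  · intro z _ hz
    rw [Matrix.mul_single_apply_of_ne (hbj := hz), zero_mul]
  · simp

theorem stage_b {F : Type*} [Field F] {n : ℕ} (hn : 4 ≤ n) (u k a : ℕ → F) (D1 E1 D2 E2 D3 : ℕ)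
    (o1 : D1 ≤ E1) (o2 : E1 < D2) (o3 : D2 ≤ E2) (o4 : E2 < D3) (o5 : D3 < n)
    (hk : ∀ p, k p ≠ 0) (hu : ∀ p, u p = 0 ↔ (p = E1 ∨ p = E2 ∨ p = n - 1))
    (r0 : a 0 * k 0 + u 0 * k 1 = 0)
    (r1 : ∀ p, a (p + 1) * k (p + 1) + u p * k p + u (p + 1) * k (p + 2) = 0)
    (six : Set (Sym2 (Fin n))) (d : Fin 3 → Fin n)
    (hd : d = ![⟨D1, by omega⟩, ⟨D2, by omega⟩, ⟨D3, by omega⟩])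
    (hsix : six = {s(⟨D1, by omega⟩, ⟨D1, by omega⟩), s(⟨D2, by omega⟩, ⟨D2, by omega⟩),
      s(⟨D3, by omega⟩, ⟨D3, by omega⟩), s(⟨E1, by omega⟩, ⟨E1 + 1, by omega⟩),
      s(⟨E2, by omega⟩, ⟨E2 + 1, by omega⟩), s(⟨n - 1, by omega⟩, ⟨0, by omega⟩)}) :
    Function.Injective d ∧ ∃ K0 : Matrix (Fin n) (Fin 3) F,
    (∀ i j, K0 (d i) j = if i = j then 1 else 0) ∧ symM (triS n u a) * K0 = 0 ∧
    (∀ κ : Fin n → F, (∀ i, κ (d i) = 0) → (symM (triS n u a)).mulVec κ = 0 → κ = 0) ∧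
    (∀ G : Matrix (Fin 3) (Fin 3) F, G.transpose = G → ∃ c : Sym2 (Fin n) → F,
      (∀ v, v ∉ six → c v = 0) ∧ K0.transpose * symM c * K0 = G) := by
  have hun : u (n - 1) = 0 := by rw [hu]; simp
  have a1 : arcIdx E1 E2 D1 = 0 := by unfold arcIdx; rw [if_pos o1]
  have a2 : arcIdx E1 E2 D2 = 1 := by unfold arcIdx; rw [if_neg (by omega), if_pos o3]
  have a3 : arcIdx E1 E2 D3 = 2 := by unfold arcIdx; rw [if_neg (by omega), if_neg (by omega)]
  have a4 : arcIdx E1 E2 E1 = 0 := by unfold arcIdx; rw [if_pos le_rfl]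
  have a5 : arcIdx E1 E2 (E1 + 1) = 1 := by unfold arcIdx; rw [if_neg (by omega), if_pos (by omega)]
  have a6 : arcIdx E1 E2 E2 = 1 := by unfold arcIdx; rw [if_neg (by omega), if_pos le_rfl]
  have a7 : arcIdx E1 E2 (E2 + 1) = 2 := by unfold arcIdx; rw [if_neg (by omega), if_neg (by omega)]
  have a8 : arcIdx E1 E2 (n - 1) = 2 := by unfold arcIdx; rw [if_neg (by omega), if_neg (by omega)]
  have a9 : arcIdx E1 E2 0 = 0 := by unfold arcIdx; rw [if_pos (by omega)]
  let kd : Fin 3 → F := fun i => k (d i)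
  have hkd : ∀ i, kd i ≠ 0 := fun i => hk _
  let kf : Fin 3 → ℕ → F := fun i p => if arcIdx E1 E2 p = i then k p / kd i else 0
  have harc : ∀ p, ¬ (p = E1 ∨ p = E2) → arcIdx E1 E2 (p + 1) = arcIdx E1 E2 p := by
    intro p hp
    unfold arcIdx
    split_ifs <;> first | rfl | omega
  have hadj : ∀ p, arcIdx E1 E2 (d p) = p := by
    intro p
    rw [hd]
    fin_cases p
    · exact a1
    · exact a2
    · exact a3
  have hinj : Function.Injective d := by
    intro i j h
    rw [← hadj i, h, hadj j]
  refine ⟨hinj, Matrix.of fun p i => kf i p, ?_, ?_, ?_, ?_⟩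
  · intro i j
    simp only [Matrix.of_apply, kf, hadj]
    split_ifs with h
    · subst h; exact div_self (hkd _)
    · rfl
  · ext p i
    rw [Matrix.mul_apply]
    have := row_sum u a (kf i) hun p
    simp only [symM, Matrix.of_apply, Matrix.zero_apply]
    rw [this]
    have hup : ∀ p, u p * kf i (p + 1) =
        if arcIdx E1 E2 p = i then u p * k (p + 1) / kd i else 0 := by
      intro p
      by_cases hp : p = E1 ∨ p = E2
      · have : u p = 0 := by rw [hu]; tauto
        rw [this]; simp
      · simp only [kf, harc p hp]; split_ifs <;> ring
    have hdn : ∀ p, u p * kf i p =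
        if arcIdx E1 E2 (p + 1) = i then u p * k p / kd i else 0 := by
      intro p
      by_cases hp : p = E1 ∨ p = E2
      · have : u p = 0 := by rw [hu]; tauto
        rw [this]; simp
      · simp only [kf, harc p hp]; split_ifs <;> ring
    rw [hup]
    rcases hp : (p : ℕ) with _ | q
    · simp only [if_true, kf]
      split_ifs
      · have := hkd i
        field_simp
        linear_combination r0
      · simp
    · simp only [Nat.add_sub_cancel, hdn, kf, if_neg (Nat.succ_ne_zero q)]
      split_ifs
      · have := hkd i
        field_simp
        linear_combination r1 q
      · simp
  · intro κ hκd hκ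
    let f : ℕ → F := fun p => if h : p < n then κ ⟨p, h⟩ else 0
    have hf : ∀ p : Fin n, f p = κ p := by intro p; simp [f]
    have hrow : ∀ p, p < n →
        a p * f p + (if p = 0 then 0 else u (p - 1) * f (p - 1)) + u p * f (p + 1) = 0 := by
      intro p hp
      have h1 := row_sum u a f hun ⟨p, hp⟩
      have h2 := congrFun hκ ⟨p, hp⟩
      simp only [Matrix.mulVec, dotProduct, symM, Matrix.of_apply, Pi.zero_apply] at h2
      simp only [hf] at h1
      rw [h2] at h1
      exact h1.symm
    have hcas : ∀ p, p < n → u p * (k p * f (p + 1) - k (p + 1) * f p) = 0 := by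
      intro p
      induction p with
      | zero =>
        intro hp
        have := hrow 0 hp
        simp only [if_true] at this
        linear_combination k 0 * this - f 0 * r0
      | succ p ih =>
        intro hp
        have e1 := hrow (p + 1) hp
        have e2 := ih (by omega)
        simp only [Nat.add_sub_cancel, if_neg (Nat.succ_ne_zero p)] at e1
        linear_combination k (p + 1) * e1 - f (p + 1) * r1 p + e2
    have hZ : ∀ p, p + 1 < n → ¬ (p = E1 ∨ p = E2) → (f p = 0 ↔ f (p + 1) = 0) := by
      intro p hp hne
      have hu0 : u p ≠ 0 := by rw [Ne, hu]; omega
      have := (mul_eq_zero.mp (hcas p (by omega))).resolve_left hu0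
      constructor
      · intro h
        rw [h] at this
        simpa [hk] using this
      · intro h
        rw [h] at this
        simpa [hk] using this
    have z1 : f D1 = 0 := by
      have := hκd 0; rw [hd] at this; rw [← this]; exact hf ⟨D1, by omega⟩
    have z2 : f D2 = 0 := by
      have := hκd 1; rw [hd] at this; rw [← this]; exact hf ⟨D2, by omega⟩
    have z3 : f D3 = 0 := by
      have := hκd 2; rw [hd] at this; rw [← this]; exact hf ⟨D3, by omega⟩
    have hall : ∀ D lo hi, f D = 0 → lo ≤ D → D ≤ hi →
        (∀ p, lo ≤ p → p < hi → (f p = 0 ↔ f (p + 1) = 0)) → ∀ p, lo ≤ p → p ≤ hi → f p = 0 := by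
      intro D lo hi hD h1 h2 h3 p hp1 hp2
      rcases le_total p D with h | h
      · exact (spread (fun p => f p = 0) p D h fun q _ _ => h3 q (by omega) (by omega)).mpr hD
      · exact (spread (fun p => f p = 0) D p h fun q _ _ => h3 q (by omega) (by omega)).mp hD
    funext p
    rw [← hf, Pi.zero_apply]
    have hp := p.2
    by_cases c1 : (p : ℕ) ≤ E1
    · exact hall D1 0 E1 z1 (by omega) o1 (fun q _ _ => hZ q (by omega) (by omega)) p (by omega) c1
    by_cases c2 : (p : ℕ) ≤ E2
    · exact hall D2 (E1 + 1) E2 z2 (by omega) o3 (fun q _ _ => hZ q (by omega) (by omega)) p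
        (by omega) c2
    · exact hall D3 (E2 + 1) (n - 1) z3 (by omega) (by omega)
        (fun q _ _ => hZ q (by omega) (by omega)) p (by omega) (by omega)
  · intro G hG
    have g01 : G 1 0 = G 0 1 := congrFun (congrFun hG 0) 1
    have g02 : G 2 0 = G 0 2 := congrFun (congrFun hG 0) 2
    have g12 : G 2 1 = G 1 2 := congrFun (congrFun hG 1) 2
    refine ⟨Pi.single s(⟨D1, by omega⟩, ⟨D1, by omega⟩) (G 0 0 / (kf 0 D1 * kf 0 D1)) +
      Pi.single s(⟨D2, by omega⟩, ⟨D2, by omega⟩) (G 1 1 / (kf 1 D2 * kf 1 D2)) +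
      Pi.single s(⟨D3, by omega⟩, ⟨D3, by omega⟩) (G 2 2 / (kf 2 D3 * kf 2 D3)) +
      Pi.single s(⟨E1, by omega⟩, ⟨E1 + 1, by omega⟩) (G 0 1 / (kf 0 E1 * kf 1 (E1 + 1))) +
      Pi.single s(⟨E2, by omega⟩, ⟨E2 + 1, by omega⟩) (G 1 2 / (kf 1 E2 * kf 2 (E2 + 1))) +
      Pi.single s(⟨n - 1, by omega⟩, ⟨0, by omega⟩) (G 0 2 / (kf 2 (n - 1) * kf 0 0)), ?_, ?_⟩
    · intro v hv
      rw [hsix] at hv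
      simp only [Set.mem_insert_iff, Set.mem_singleton_iff, not_or] at hv
      obtain ⟨v1, v2, v3, v4, v5, v6⟩ := hv
      simp only [Pi.add_apply, Pi.single_apply, if_neg v1, if_neg v2, if_neg v3, if_neg v4,
        if_neg v5, if_neg v6, add_zero]
    · simp only [symM_add]
      rw [symM_single_diag, symM_single_diag, symM_single_diag,
        symM_single_off (by simp), symM_single_off (by simp),
        symM_single_off (by rw [Ne, Fin.mk.injEq]; omega)]
      have nz : ∀ p i, arcIdx E1 E2 p = i → kf i p ≠ 0 := by
        intro p i h
        simp only [kf, if_pos h]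
        exact div_ne_zero (hk p) (hkd i)
      have zz : ∀ p i, arcIdx E1 E2 p ≠ i → kf i p = 0 := by
        intro p i h
        simp only [kf, if_neg h]
      have b1 := nz _ _ a1
      have b2 := nz _ _ a2
      have b3 := nz _ _ a3
      have b4 := nz _ _ a4
      have b5 := nz _ _ a5
      have b6 := nz _ _ a6
      have b7 := nz _ _ a7
      have b8 := nz _ _ a8
      have b9 := nz _ _ a9
      ext i j
      simp only [Matrix.mul_add, Matrix.add_mul, Matrix.add_apply, sandwich, Matrix.of_apply]
      clear_value kf
      fin_cases i <;> fin_cases j <;>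
        simp [zz, a1, a2, a3, a4, a5, a6, a7, a8, a9, g01, g02, g12] <;> field_simp


theorem homComp_mem {K : Type*} [Field K] {n t : ℕ} (m : ℕ) (f : MvPolynomial (Sym2 (Fin n)) K)
    (hf : f ∈ minorsIdeal K n t) : homogeneousComponent m f ∈ minorsIdeal K n t := by
  let _ : GradedAlgebra (homogeneousSubmodule (Sym2 (Fin n)) K) := MvPolynomial.gradedAlgebra
  have h : (minorsIdeal K n t).IsHomogeneous (homogeneousSubmodule (Sym2 (Fin n)) K) := by
    refine Ideal.homogeneous_span _ _ ?_
    rintro x ⟨a, b, -, -, rfl⟩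
    refine ⟨t, ?_⟩
    rw [mem_homogeneousSubmodule, symMinor, Matrix.det_apply]
    refine IsHomogeneous.sum _ _ _ fun σ _ => ?_
    rw [← mem_homogeneousSubmodule]
    refine Submodule.smul_of_tower_mem _ _ ?_
    rw [mem_homogeneousSubmodule]
    have := IsHomogeneous.prod (Finset.univ : Finset (Fin t))
      (fun i => (X s(a (σ i), b i) : MvPolynomial (Sym2 (Fin n)) K)) (fun _ => 1)
      (fun i _ => isHomogeneous_X _ _)
    simpa using this
  have h2 := h m hf
  rw [← decomposition.decompose'_apply]
  exact h2

theorem coeff_aeval {σ K F : Type*} [Fintype σ] [Field K] [CommRing F] [Algebra K F]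
    (f : MvPolynomial σ K) (w : σ → ℕ) (Y : σ → Polynomial F) (W : ℕ)
    (hW : ∀ ν ∈ f.support, W ≤ ∑ v, ν v * w v) :
    (aeval (fun v => Polynomial.X ^ (w v) * Y v) f).coeff W =
      aeval (fun v => (Y v).coeff 0)
        (∑ ν ∈ f.support.filter (fun ν => ∑ v, ν v * w v = W), monomial ν (coeff ν f)) := by
  rw [aeval_def, eval₂_eq', Polynomial.finsetSum_coeff, map_sum, Finset.sum_filter]
  refine Finset.sum_congr rfl fun ν hν => ?_
  have h1 : ∏ v, (Polynomial.X ^ (w v) * Y v) ^ ν v =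
      Polynomial.X ^ (∑ v, ν v * w v) * ∏ v, Y v ^ ν v := by
    rw [← Finset.prod_pow_eq_pow_sum, ← Finset.prod_mul_distrib]
    refine Finset.prod_congr rfl fun v _ => ?_
    rw [mul_pow, ← pow_mul, mul_comm (w v)]
  have h2 : algebraMap K (Polynomial F) (coeff ν f) = Polynomial.C (algebraMap K F (coeff ν f)) :=
    rfl
  rw [h1, h2, Polynomial.coeff_C_mul, Polynomial.coeff_X_pow_mul']
  have h3 := hW ν hν
  by_cases h : ∑ v, ν v * w v = W
  · rw [if_pos h, if_pos h.le, h, Nat.sub_self, aeval_monomial, Finsupp.prod_pow]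
    congr 1
    simp only [← Polynomial.constantCoeff_apply, map_prod, map_pow]
  · rw [if_neg h, if_neg (by omega), mul_zero]

theorem wt_lt {σ : Type*} [Fintype σ] (rank : σ → ℕ) (hinj : Function.Injective rank)
    (S : Set σ) [DecidablePred (· ∈ S)] (Bd : ℕ) (x y : σ → ℕ) (hy : ∑ v, y v < Bd) (v : σ)
    (hv : v ∈ S) (hlt : y v < x v) (heq : ∀ w ∈ S, rank v < rank w → x w = y w) :
    ∑ u, y u * (if u ∈ S then Bd ^ rank u else 0) < ∑ u, x u * (if u ∈ S then Bd ^ rank u else 0) := by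
  classical
  have hB : 0 < Bd := by omega
  set wt : σ → ℕ := fun u => if u ∈ S then Bd ^ rank u else 0 with hwt
  show ∑ u, y u * wt u < ∑ u, x u * wt u
  -- split y by rank
  have key : Bd * ∑ u, (if rank u < rank v then y u * wt u else 0) < Bd * Bd ^ rank v := by
    calc Bd * ∑ u, (if rank u < rank v then y u * wt u else 0)
        = ∑ u, Bd * (if rank u < rank v then y u * wt u else 0) := Finset.mul_sum _ _ _
      _ ≤ ∑ u, y u * Bd ^ rank v := by
        refine Finset.sum_le_sum fun u _ => ?_
        split_ifs with h
        · calc Bd * (y u * wt u) ≤ Bd * (y u * Bd ^ rank u) := by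
                gcongr
                simp only [hwt]; split_ifs <;> simp
            _ = y u * Bd ^ (rank u + 1) := by ring
            _ ≤ y u * Bd ^ rank v := by gcongr <;> omega
        · simp
      _ = (∑ u, y u) * Bd ^ rank v := (Finset.sum_mul _ _ _).symm
      _ < Bd * Bd ^ rank v := by
        apply Nat.mul_lt_mul_of_pos_right hy (pow_pos hB _)
  have key2 := Nat.lt_of_mul_lt_mul_left key
  have hone : ∑ u, (if u = v then Bd ^ rank v else 0) = Bd ^ rank v := by simp
  have : ∑ u, y u * wt u + Bd ^ rank v ≤ ∑ u, x u * wt u +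
      ∑ u, (if rank u < rank v then y u * wt u else 0) := by
    rw [← hone, ← Finset.sum_add_distrib, ← Finset.sum_add_distrib]
    refine Finset.sum_le_sum fun u _ => ?_
    by_cases huv : u = v
    · subst huv
      simp only [if_true, hwt, if_pos hv]
      have : y u * Bd ^ rank u + Bd ^ rank u ≤ x u * Bd ^ rank u := by
        calc y u * Bd ^ rank u + Bd ^ rank u = (y u + 1) * Bd ^ rank u := by ring
          _ ≤ _ := by gcongr; omega
      omega
    · rw [if_neg huv]
      split_ifs with h
      · omega
      · have hr : rank v < rank u := by
          have : rank u ≠ rank v := fun h' => huv (hinj h')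
          omega
        by_cases hu : u ∈ S
        · rw [heq u hu hr]
        · simp [hwt, hu]
  omega


theorem triS_map {R S : Type*} [CommRing R] [CommRing S] (φ : R →+* S) (n : ℕ) (u a : ℕ → R)
    (v : Sym2 (Fin n)) :
    triS n (fun p => φ (u p)) (fun p => φ (a p)) v = φ (triS n u a v) := by
  induction v using Sym2.ind with
  | _ p q =>
    rw [triS_mk, triS_mk]
    unfold triF
    split_ifs <;> simp

set_option maxHeartbeats 1000000 in
theorem family (K : Type*) [Field K] {n : ℕ} (hn : 4 ≤ n) {c : ℕ → Fin n} (hc : IsEnum n c)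
    (D1 E1 D2 E2 D3 : ℕ) (o1 : D1 ≤ E1) (o2 : E1 < D2) (o3 : D2 ≤ E2) (o4 : E2 < D3) (o5 : D3 < n)
    (w1 w2 : Sym2 (Fin n) → ℕ) (hw1 : ∀ p q, w1 s(c p, c p) < w1 s(c q, c (q + 1)))
    (hw1r : ∀ v, v ∉ Dset n ∪ Uset n → w1 v = 0)
    (hw2 : ∀ v, v ∉ Dset n ∪ Uset n → 0 < w2 v)
    (hw2r : ∀ v, v ∈ Dset n ∪ Uset n → w2 v = 0) (N : ℕ) :
    ∃ A Y : Sym2 (Fin n) → Polynomial K, (∀ v, A v = Polynomial.X ^ (w1 v) * Y v) ∧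
      (∀ v, ¬ (v = s(c D1, c D1) ∨ v = s(c D2, c D2) ∨ v = s(c D3, c D3) ∨ v = s(c E1, c (E1 + 1)) ∨
        v = s(c E2, c (E2 + 1)) ∨ v = s(c (n - 1), c 0)) → (Y v).coeff 0 = 1) ∧
      ∃ Y2 : Sym2 (Fin n) → Polynomial (FractionRing (Polynomial K)),
        (∀ v, (Y2 v).coeff 0 = algebraMap (Polynomial K) (FractionRing (Polynomial K)) (A v)) ∧
        ∀ f ∈ minorsIdeal K n (n - 2), Polynomial.X ^ (N + 1) ∣
          aeval (fun v => Polynomial.X ^ (w2 v) * Y2 v) f := by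
  classical
  let Dp : ℕ → ℕ := fun p => if p ≤ E1 then D1 else if p ≤ E2 then D2 else D3
  obtain ⟨u, k, a, hk, hu, r0, r1, huy, hay⟩ := stage_a K n
    (fun p => p = E1 ∨ p = E2 ∨ p = n - 1) Dp (fun p => w1 s(c p, c p))
    (fun p => w1 s(c p, c (p + 1))) hw1
    (by intro p hp; simp only [Dp]; split_ifs <;> first | rfl | omega)
    (by intro p hp; simp only [Dp]; split_ifs <;> omega)
    (by intro p hp; simp only [Dp]; split_ifs <;> omega)
  set φ := algebraMap (Polynomial K) (FractionRing (Polynomial K)) with hφ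
  have hφi : Function.Injective φ := IsFractionRing.injective _ _
  have hbij : Function.Bijective (fun p : Fin n => c p) := by
    apply Function.Injective.bijective_of_finite
    intro p q h
    exact Fin.ext ((hc.eq_lt p.2 q.2).mp h)
  let π : Fin n ≃ Fin n := Equiv.ofBijective _ hbij
  have hπ : ∀ p : Fin n, π p = c p := fun p => rfl
  have hπs : ∀ p (hp : p < n), π.symm (c p) = ⟨p, hp⟩ := by
    intro p hp
    rw [Equiv.symm_apply_eq]; rfl
  have hcn : c n = c 0 := by have := hc.periodic 0; rwa [zero_add] at this
  have mD : ∀ p, s(c p, c p) ∈ Dset n ∪ Uset n := fun p => Or.inl ⟨c p, rfl⟩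
  have mU : ∀ p, s(c p, c (p + 1)) ∈ Dset n ∪ Uset n := fun p => Or.inr ((hc.umem _).mpr ⟨p, rfl⟩)
  have mL : s(c (n - 1), c 0) ∈ Dset n ∪ Uset n := by
    have := mU (n - 1)
    rwa [show n - 1 + 1 = n by omega, hcn] at this
  obtain ⟨hdinj, K0, hK0, hAK, hP, hs⟩ := stage_b hn (fun p => φ (u p)) (fun p => φ (k p))
    (fun p => φ (a p)) D1 E1 D2 E2 D3 o1 o2 o3 o4 o5
    (fun p h => hk p (hφi (by rw [h, map_zero])))
    (fun p => by rw [map_eq_zero_iff φ hφi]; exact hu p)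
    (by rw [← map_mul, ← map_mul, ← map_add, r0, map_zero])
    (fun p => by rw [← map_mul, ← map_mul, ← map_mul, ← map_add, ← map_add, r1, map_zero])
    _ _ rfl rfl
  set six : Set (Sym2 (Fin n)) :=
    {s(⟨D1, by omega⟩, ⟨D1, by omega⟩), s(⟨D2, by omega⟩, ⟨D2, by omega⟩),
      s(⟨D3, by omega⟩, ⟨D3, by omega⟩), s(⟨E1, by omega⟩, ⟨E1 + 1, by omega⟩),
      s(⟨E2, by omega⟩, ⟨E2 + 1, by omega⟩), s(⟨n - 1, by omega⟩, ⟨0, by omega⟩)} with hsix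
  set d : Fin 3 → Fin n := ![⟨D1, by omega⟩, ⟨D2, by omega⟩, ⟨D3, by omega⟩] with hd
  have hsixmem : ∀ v ∈ six, Sym2.map π v ∈ Dset n ∪ Uset n := by
    intro v hv
    simp only [hsix, Set.mem_insert_iff, Set.mem_singleton_iff] at hv
    rcases hv with rfl | rfl | rfl | rfl | rfl | rfl
    · exact mD D1
    · exact mD D2
    · exact mD D3
    · exact mU E1
    · exact mU E2
    · exact mL
  let B : Sym2 (Fin n) → Polynomial (FractionRing (Polynomial K)) := fun v =>
    if Sym2.map π v ∈ Dset n ∪ Uset n then Polynomial.C (φ (triS n u a v)) else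
      Polynomial.X ^ (w2 (Sym2.map π v))
  obtain ⟨Xs, Kx, Ex, hXs, hXc, hKd, -, hXK⟩ := hensel
    (triS n (fun p => φ (u p)) (fun p => φ (a p))) d hdinj K0 hK0 hAK hP six hs B (by
      intro v
      rw [triS_map]
      simp only [B]
      split_ifs with hv
      · simp
      · have h0 := hw2 _ hv
        have : triS n u a v = 0 := by
          revert hv
          induction v using Sym2.ind with
          | _ p q =>
            intro hv
            rw [Sym2.map_mk] at hv
            rw [triS_mk]
            unfold triF
            split_ifs with e1 e2 e3
            · exact absurd (Fin.ext e1 ▸ mD p) hv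
            · refine absurd (mU p) ?_
              rw [← e2]; exact hv
            · refine absurd (mU q) ?_
              rw [← e3, Sym2.eq_swap]; exact hv
            · rfl
        rw [this, map_zero, map_pow]
        simp [h0.ne']) N
  have hmapmap : ∀ v, Sym2.map π (Sym2.map π.symm v) = v := by
    intro v
    rw [Sym2.map_map]
    simp
  let A : Sym2 (Fin n) → Polynomial K := fun v =>
    if v ∈ Dset n ∪ Uset n then triS n u a (Sym2.map π.symm v) else 1
  have hAY : ∀ v, ∃ y : Polynomial K, A v = Polynomial.X ^ (w1 v) * y ∧
      (¬ (v = s(c D1, c D1) ∨ v = s(c D2, c D2) ∨ v = s(c D3, c D3) ∨ v = s(c E1, c (E1 + 1)) ∨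
        v = s(c E2, c (E2 + 1)) ∨ v = s(c (n - 1), c 0)) → y.coeff 0 = 1) := by
    intro v
    by_cases hv : v ∈ Dset n ∪ Uset n
    · simp only [A, if_pos hv]
      rcases hv with hv | hv
      · obtain ⟨p, hp, rfl⟩ := (hc.dmem_lt _).mp hv
        obtain ⟨y, hy1, -, hy3⟩ := hay p hp
        refine ⟨y, ?_, ?_⟩
        · rw [Sym2.map_mk, hπs p hp, triS_mk, ← hy1]
          simp [triF]
        · intro hne
          refine hy3 fun h => hne ?_
          simp only [Dp] at h
          split_ifs at h
          · exact Or.inl (by rw [h])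
          · exact Or.inr (Or.inl (by rw [h]))
          · exact Or.inr (Or.inr (Or.inl (by rw [h])))
      · obtain ⟨p, hp, rfl⟩ := (hc.umem_lt _).mp hv
        by_cases hpn : p + 1 < n
        · obtain ⟨y, hy1, -, hy3⟩ := huy p
          refine ⟨y, ?_, ?_⟩
          · rw [Sym2.map_mk, hπs p hp, hπs (p + 1) hpn, triS_mk, ← hy1]
            simp [triF]
          · intro hne
            refine hy3 fun h => hne ?_
            rcases h with h | h | h
            · exact Or.inr (Or.inr (Or.inr (Or.inl (by rw [h]))))
            · exact Or.inr (Or.inr (Or.inr (Or.inr (Or.inl (by rw [h])))))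
            · omega
        · have hp' : p = n - 1 := by omega
          have e : s(c p, c (p + 1)) = s(c (n - 1), c 0) := by
            rw [hp', show n - 1 + 1 = n by omega, hcn]
          rw [e]
          refine ⟨0, ?_, ?_⟩
          · rw [Sym2.map_mk, hπs (n - 1) (by omega), hπs 0 (by omega), triS_mk]
            unfold triF
            rw [if_neg (by simp; omega), if_neg (by simp), if_neg (by simp; omega), mul_zero]
          · intro hne; exact absurd (by simp) hne
    · refine ⟨1, ?_, ?_⟩
      · simp only [A, if_neg hv, hw1r v hv]; simp
      · simp
  choose Y hY1 hY2 using hAY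
  refine ⟨A, Y, hY1, hY2, fun v => if v ∈ Dset n ∪ Uset n then Xs (Sym2.map π.symm v) else 1,
    ?_, ?_⟩
  · intro v
    simp only [A]
    split_ifs with hv
    · rw [← Polynomial.constantCoeff_apply, hXc, triS_map]
    · simp
  · have hpt : (fun v => Polynomial.X ^ (w2 v) *
        (if v ∈ Dset n ∪ Uset n then Xs (Sym2.map π.symm v) else 1)) =
        fun v => Xs (Sym2.map π.symm v) := by
      funext v
      split_ifs with hv
      · rw [hw2r v hv]; simp
      · rw [hXs]
        · simp only [B, hmapmap, if_neg hv, mul_one]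
        · intro h
          have := hsixmem _ h
          rw [hmapmap] at this
          exact hv this
    rw [hpt]
    intro f hf
    rw [← Ideal.mem_span_singleton]
    suffices h : minorsIdeal K n (n - 2) ≤ Ideal.comap
        (aeval (fun v => Xs (Sym2.map π.symm v)) :
          MvPolynomial (Sym2 (Fin n)) K →ₐ[K] Polynomial (FractionRing (Polynomial K)))
        (Ideal.span {Polynomial.X ^ (N + 1)}) from h hf
    rw [minorsIdeal, Ideal.span_le]
    rintro p ⟨r, t, -, -, rfl⟩
    rw [SetLike.mem_coe, Ideal.mem_comap, Ideal.mem_span_singleton, symMinor, AlgHom.map_det]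
    have := aeval_minors_dvd Xs d hdinj Kx Ex hKd _ hXK (m := n - 2) (by simp; omega)
      (fun i => π.symm (r i)) (fun i => π.symm (t i))
    convert this using 2
    ext1 i j
    simp [symM, AlgHom.mapMatrix_apply]


theorem coeff_part {σ K : Type*} [Field K] (T : Finset (σ →₀ ℕ)) (f : MvPolynomial σ K)
    (ν : σ →₀ ℕ) [Decidable (ν ∈ T)] :
    coeff ν (∑ m ∈ T, monomial m (coeff m f)) = if ν ∈ T then coeff ν f else 0 := by
  classical
  simp only [coeff_sum, coeff_monomial]
  rw [Finset.sum_ite_eq']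
  congr

set_option maxHeartbeats 1000000 in
theorem part_two {K : Type*} [Field K] (n : ℕ) (hn : 4 ≤ n)
    (rank : Sym2 (Fin n) → ℕ) (hrank : IsGoodRank n rank) (f : MvPolynomial (Sym2 (Fin n)) K)
    (hf : f ∈ minorsIdeal K n (n - 2)) (μ : Sym2 (Fin n) →₀ ℕ) (hμ : IsLeadingMonomial rank f μ) :
    ∃ N, goodSet n N ∧ ∀ v ∈ N, μ v ≠ 0 := by
  classical
  by_contra hcon
  push Not at hcon
  obtain ⟨c, hc, D1, E1, D2, E2, D3, o1, o2, o3, o4, o5, z1, z2, z3, z4, z5, z6⟩ :=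
    six_of_no_good hn (fun v => μ v = 0) hcon
  set h := homogeneousComponent μ.degree f with hh
  have hhI : h ∈ minorsIdeal K n (n - 2) := homComp_mem _ f hf
  have hco : ∀ ν, coeff ν h = if ν.degree = μ.degree then coeff ν f else 0 := fun ν =>
    coeff_homogeneousComponent _ _ _
  have hμh : coeff μ h ≠ 0 := by
    rw [hco, if_pos rfl]; exact mem_support_iff.mp hμ.1
  have hsum : ∀ ν : Sym2 (Fin n) →₀ ℕ, ∑ v, ν v = ν.degree := fun ν =>
    (Finsupp.degree_eq_sum ν).symm
  have hdeg : ∀ ν : Sym2 (Fin n) →₀ ℕ, (ν.sum fun _ e => e) = ν.degree := fun ν => rfl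
  let Bd := μ.degree + 2
  let S : Set (Sym2 (Fin n)) := Dset n ∪ Uset n
  let w1 : Sym2 (Fin n) → ℕ := fun v => if v ∈ S then Bd ^ rank v else 0
  let w2 : Sym2 (Fin n) → ℕ := fun v => if v ∈ Sᶜ then Bd ^ rank v else 0
  have hBd : 1 < Bd := by simp only [Bd]; omega
  have hrS : ∀ v ∈ S, ∀ w ∈ Sᶜ, rank v < rank w := by
    intro v hv w hw
    have h1 := rank_rest hrank hw
    rcases hv with ⟨i, rfl⟩ | hv
    · have := rank_D hrank i; omega
    · have := rank_U hn hrank hv; omega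
  have tri : ∀ ν ∈ h.support, ν ≠ μ → (∑ v, μ v * w2 v < ∑ v, ν v * w2 v) ∨
      (∑ v, ν v * w2 v = ∑ v, μ v * w2 v ∧ ∑ v, μ v * w1 v < ∑ v, ν v * w1 v) := by
    intro ν hν hne
    have h1 := mem_support_iff.mp hν
    rw [hco] at h1
    split_ifs at h1 with hd
    swap
    · exact absurd rfl h1
    have hlt := hμ.2 ν (mem_support_iff.mpr h1) hne
    rcases hlt with hlt | ⟨-, v, hv, heq⟩
    · rw [hdeg, hdeg, hd] at hlt; exact absurd hlt (lt_irrefl _)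
    have hyB : ∑ v, μ v < Bd := by rw [hsum]; simp only [Bd]; omega
    by_cases hvS : v ∈ S
    · right
      refine ⟨?_, wt_lt rank hrank.1 S Bd ν μ hyB v hvS hv fun w _ hw => heq w hw⟩
      refine Finset.sum_congr rfl fun w _ => ?_
      simp only [w2]
      split_ifs with hw
      · rw [heq w (hrS v hvS w hw)]
      · simp
    · left
      exact wt_lt rank hrank.1 Sᶜ Bd ν μ hyB v hvS hv fun w _ hw => heq w hw
  obtain ⟨A, Y, hAY, hY, Y2, hY2, hdvd⟩ := family K hn hc D1 E1 D2 E2 D3 o1 o2 o3 o4 (by omega)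
    w1 w2 (by
      intro p q
      have m2 : s(c q, c (q + 1)) ∈ Uset n := (hc.umem _).mpr ⟨q, rfl⟩
      have i1 : s(c p, c p) ∈ S := Or.inl ⟨c p, rfl⟩
      have i2 : s(c q, c (q + 1)) ∈ S := Or.inr m2
      simp only [w1, if_pos i1, if_pos i2]
      refine Nat.pow_lt_pow_right hBd ?_
      have := rank_D hrank (c p)
      have := rank_U hn hrank m2
      omega)
    (by intro v hv; exact if_neg hv)
    (by
      intro v hv
      have : v ∈ Sᶜ := hv
      simp only [w2, if_pos this]
      positivity)
    (by intro v hv; exact if_neg (fun h => h hv))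
    (∑ v, μ v * w2 v)
  have hz := Polynomial.X_pow_dvd_iff.mp (hdvd h hhI) _ (Nat.lt_succ_self _)
  rw [coeff_aeval h w2 Y2 _ (by
    intro ν hν
    by_cases hne : ν = μ
    · rw [hne]
    · rcases tri ν hν hne with h | h
      · exact h.le
      · exact h.1.ge)] at hz
  set T := h.support.filter (fun ν => ∑ v, ν v * w2 v = ∑ v, μ v * w2 v) with hT
  set h2 := ∑ ν ∈ T, monomial ν (coeff ν h) with hh2
  have hY2f : (fun v => (Y2 v).coeff 0) = fun v =>
      algebraMap (Polynomial K) (FractionRing (Polynomial K)) (A v) := funext hY2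
  rw [hY2f, show (fun v => algebraMap (Polynomial K) (FractionRing (Polynomial K)) (A v)) =
    (algebraMap (Polynomial K) (FractionRing (Polynomial K))) ∘ A from rfl,
    aeval_algebraMap_apply, map_eq_zero_iff _ (IsFractionRing.injective _ _)] at hz
  have hco2 : ∀ ν, coeff ν h2 = if ν ∈ T then coeff ν h else 0 := fun ν => coeff_part T h ν
  have hsupp : ∀ ν, ν ∈ h2.support → ν ∈ T := by
    intro ν hν
    by_contra hn'
    rw [mem_support_iff, hco2, if_neg hn'] at hν
    exact hν rfl
  have hμT : μ ∈ T := by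
    rw [hT, Finset.mem_filter]; exact ⟨mem_support_iff.mpr hμh, rfl⟩
  have hμ2 : coeff μ h2 = coeff μ h := by rw [hco2, if_pos hμT]
  have tri2 : ∀ ν ∈ h2.support, ν ≠ μ → ∑ v, μ v * w1 v < ∑ v, ν v * w1 v := by
    intro ν hν hne
    have := hsupp ν hν
    rw [hT, Finset.mem_filter] at this
    rcases tri ν this.1 hne with h | h
    · omega
    · exact h.2
  rw [show A = fun v => Polynomial.X ^ (w1 v) * Y v from funext hAY] at hz
  have hz2 := congrArg (fun p => Polynomial.coeff p (∑ v, μ v * w1 v)) hz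
  simp only [Polynomial.coeff_zero] at hz2
  rw [coeff_aeval h2 w1 Y _ (by
    intro ν hν
    by_cases hne : ν = μ
    · rw [hne]
    · exact (tri2 ν hν hne).le)] at hz2
  have hT2 : h2.support.filter (fun ν => ∑ v, ν v * w1 v = ∑ v, μ v * w1 v) = {μ} := by
    ext ν
    rw [Finset.mem_filter, Finset.mem_singleton]
    constructor
    · rintro ⟨h1, h2⟩
      by_contra hne
      have := tri2 ν h1 hne
      omega
    · rintro rfl
      exact ⟨mem_support_iff.mpr (by rw [hμ2]; exact hμh), rfl⟩
  rw [hT2, Finset.sum_singleton, aeval_monomial, Finsupp.prod, Finset.prod_eq_one, mul_one,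
    hμ2] at hz2
  · exact hμh hz2
  · intro v hv
    rw [hY, one_pow]
    rw [Finsupp.mem_support_iff] at hv
    rintro (e | e | e | e | e | e) <;> rw [e] at hv <;> contradiction


/-- **Proposition 4.3.** For `n ≥ 4`, `in_≺(I_{n-2})` is generated by the squarefree
monomials `∏_{v ∈ N} v`, where `N` runs over the `(n-2)`-element subsets of `D ∪ U`
containing no edge of the `2n`-cycle `G`. -/
theorem stmt13 {K : Type*} [Field K] (n : ℕ) (hn : 4 ≤ n)
    (rank : Sym2 (Fin n) → ℕ) (hrank : IsGoodRank n rank) :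
    initialIdeal rank (minorsIdeal K n (n - 2)) =
      Ideal.span {p | ∃ N : Finset (Sym2 (Fin n)), ↑N ⊆ Dset n ∪ Uset n ∧
        N.card = n - 2 ∧ (∀ v ∈ N, ∀ w ∈ N, ¬ GAdj n v w) ∧
        p = ∏ v ∈ N, MvPolynomial.X v} := by

  apply le_antisymm
  · rw [initialIdeal, Ideal.span_le]
    rintro p ⟨f, hf, -, μ, hμ, rfl⟩
    obtain ⟨N, ⟨h1, h2, h3⟩, hN⟩ := part_two n hn rank hrank f hf μ hμ
    have hmem : (∏ v ∈ N, (X v : MvPolynomial (Sym2 (Fin n)) K)) ∈ Ideal.span {p | ∃ N : Finset (Sym2 (Fin n)), ↑N ⊆ Dset n ∪ Uset n ∧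
        N.card = n - 2 ∧ (∀ v ∈ N, ∀ w ∈ N, ¬ GAdj n v w) ∧
        p = ∏ v ∈ N, (MvPolynomial.X v : MvPolynomial (Sym2 (Fin n)) K)} :=
      Ideal.subset_span ⟨N, h1, h2, h3, rfl⟩
    refine Ideal.mem_of_dvd _ ?_ hmem
    rw [monomial_eq, Finsupp.prod]
    refine Dvd.dvd.mul_left ?_ _
    have hsub : N ⊆ μ.support := fun v hv => Finsupp.mem_support_iff.mpr (hN v hv)
    refine dvd_trans ?_ (Finset.prod_dvd_prod_of_subset _ _ _ hsub)
    exact Finset.prod_dvd_prod_of_dvd _ _ fun v hv => dvd_pow_self _ (hN v hv)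
  · rw [Ideal.span_le]
    rintro p ⟨N, h1, h2, h3, rfl⟩
    exact part_one n hn rank hrank N h1 h2 h3
end

section
/- For every t with 2 ≤ t ≤ n, the Krull dimension of the quotient ring S/I_t equals (2n+2-t)(t-1)/2. -/
theorem card_meet {n r : ℕ} (A : Finset (Fin n)) (hA : A.card = r) :
    Fintype.card {p : Sym2 (Fin n) // ∃ i ∈ A, i ∈ p} = ((2 * n + 1 - r) * r) / 2 := by
  classical
  have h1 : Fintype.card {p : Sym2 (Fin n) // ¬ ∃ i ∈ A, i ∈ p} = (n - r + 1).choose 2 := by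
    rw [Fintype.card_subtype]
    have : (Finset.univ.filter fun p : Sym2 (Fin n) => ¬ ∃ i ∈ A, i ∈ p) = (Aᶜ).sym2 := by
      ext p
      simp only [Finset.mem_filter, Finset.mem_univ, true_and, Finset.mem_sym2_iff,
        Finset.mem_compl]
      push Not
      exact ⟨fun h a ha hA => h a hA ha, fun h a hA ha => h a ha hA⟩
    rw [this, Finset.card_sym2, Finset.card_compl, hA, Fintype.card_fin]
  have hr : r ≤ n := by
    have := A.card_le_univ
    simpa [hA] using this
  have h2 := Fintype.card_subtype_compl (fun p : Sym2 (Fin n) => ∃ i ∈ A, i ∈ p)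
  have h3 := Fintype.card_subtype_le (fun p : Sym2 (Fin n) => ∃ i ∈ A, i ∈ p)
  rw [h1, Sym2.card, Fintype.card_fin] at h2
  rw [Sym2.card, Fintype.card_fin] at h3
  obtain ⟨m, rfl⟩ := Nat.exists_eq_add_of_le hr
  have e1 : (r + m + 1).choose 2 * 2 = (r+m+1) * (r+m) := by
    rw [Nat.choose_two_right, Nat.div_mul_cancel]; · simp
    exact (Nat.even_mul_pred_self _).two_dvd
  have e2 : (m + 1).choose 2 * 2 = (m+1) * m := by
    rw [Nat.choose_two_right, Nat.div_mul_cancel]; · simp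
    exact (Nat.even_mul_pred_self _).two_dvd
  have e4 : r + m - r = m := by omega
  rw [e4] at h2
  have e3 : 2 * (r + m) + 1 - r = r + 2 * m + 1 := by omega
  rw [e3]
  symm
  apply Nat.div_eq_of_eq_mul_left (by norm_num)
  have h5 : Fintype.card {p : Sym2 (Fin (r+m)) // ∃ i ∈ A, i ∈ p} + (m+1).choose 2 = (r+m+1).choose 2 := by omega
  nlinarith

theorem minor_any {L : Type*} [CommRing L] {n t : ℕ} (M : Matrix (Fin n) (Fin n) L)
    (h : ∀ a b : Fin t → Fin n, StrictMono a → StrictMono b → (M.submatrix a b).det = 0)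
    (a b : Fin t → Fin n) : (M.submatrix a b).det = 0 := by
  by_cases ha : Function.Injective a
  swap
  · obtain ⟨i, j, hij, hne⟩ : ∃ i j, a i = a j ∧ i ≠ j := by
      simpa [Function.Injective] using ha
    exact Matrix.det_zero_of_row_eq hne (by ext k; simp [hij])
  by_cases hb : Function.Injective b
  swap
  · obtain ⟨i, j, hij, hne⟩ : ∃ i j, b i = b j ∧ i ≠ j := by
      simpa [Function.Injective] using hb
    exact Matrix.det_zero_of_column_eq hne (by intro k; simp [hij])
  have h1 := h (a ∘ Tuple.sort a) (b ∘ Tuple.sort b)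
    ((Tuple.monotone_sort a).strictMono_of_injective (ha.comp (Tuple.sort a).injective))
    ((Tuple.monotone_sort b).strictMono_of_injective (hb.comp (Tuple.sort b).injective))
  have e : M.submatrix (a ∘ Tuple.sort a) (b ∘ Tuple.sort b) =
    (((M.submatrix a b).submatrix (Tuple.sort a) id).submatrix id (Tuple.sort b)) := rfl
  rw [e, Matrix.det_permute', Matrix.det_permute] at h1
  rcases Int.units_eq_one_or (Equiv.Perm.sign (Tuple.sort a)) with h2 | h2 <;>
  rcases Int.units_eq_one_or (Equiv.Perm.sign (Tuple.sort b)) with h3 | h3 <;>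
  simpa [h2, h3] using h1

theorem minor_ge {L : Type*} [CommRing L] {n t : ℕ} (M : Matrix (Fin n) (Fin n) L)
    (h : ∀ a b : Fin t → Fin n, (M.submatrix a b).det = 0) (s : ℕ) (hs : t ≤ s) :
    ∀ a b : Fin s → Fin n, (M.submatrix a b).det = 0 := by
  induction s, hs using Nat.le_induction with
  | base => exact h
  | succ k hk ih =>
    intro a b
    rw [Matrix.det_succ_row _ 0]
    refine Finset.sum_eq_zero fun j _ => ?_
    rw [Matrix.submatrix_submatrix, ih, mul_zero]

theorem field_gen {L : Type*} [Field L] {n r : ℕ} (hr : r ≤ n) (M : Matrix (Fin n) (Fin n) L)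
    (hsym : ∀ i j, M i j = M j i)
    (h : ∀ a b : Fin (r+1) → Fin n, StrictMono a → StrictMono b → (M.submatrix a b).det = 0) :
    ∃ A : Finset (Fin n), A.card = r ∧ ∀ F : Subfield L, (∀ i ∈ A, ∀ j, M i j ∈ F) →
      ∀ i j, M i j ∈ F := by
  classical
  obtain ⟨κ, a, ha, hspan, hli⟩ := exists_linearIndependent' L (fun i => M i)
  have : Finite κ := Finite.of_injective a ha
  have := Fintype.ofFinite κ
  have hC : ∀ i, ∃ c : κ → L, ∀ j, M i j = ∑ k, c k * M (a k) j := by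
    intro i
    have : M i ∈ Submodule.span L (Set.range ((fun i => M i) ∘ a)) := by
      rw [hspan]; exact Submodule.subset_span ⟨i, rfl⟩
    obtain ⟨c, hc⟩ := (Submodule.mem_span_range_iff_exists_fun L).1 this
    refine ⟨c, fun j => ?_⟩
    rw [← hc]
    simp
  choose C hC using hC
  set N : Matrix κ κ L := M.submatrix a a with hN
  have hdet : N.det ≠ 0 := by
    intro h0
    obtain ⟨v, hv, hv0⟩ := Matrix.exists_vecMul_eq_zero_iff.2 h0
    apply hv
    have hz : ∑ k, v k • ((fun i => M i) ∘ a) k = 0 := by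
      ext j
      simp only [Finset.sum_apply, Pi.smul_apply, Function.comp, smul_eq_mul, Pi.zero_apply]
      have : ∀ k, v k * M (a k) j = ∑ l, C j l * (v k * N k l) := by
        intro k
        rw [hsym, hC j, Finset.mul_sum]
        refine Finset.sum_congr rfl fun l _ => ?_
        rw [hsym]; simp [hN]; ring
      simp_rw [this]
      rw [Finset.sum_comm]
      refine Finset.sum_eq_zero fun l _ => ?_
      rw [← Finset.mul_sum]
      have := congrFun hv0 l
      simp only [Matrix.vecMul, dotProduct, Pi.zero_apply] at this
      rw [this, mul_zero]
    ext k
    exact Fintype.linearIndependent_iff.1 hli v hz k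
  have hcard : Fintype.card κ ≤ r := by
    by_contra hlt
    push Not at hlt
    have := minor_ge M (minor_any M h) (Fintype.card κ) hlt (a ∘ (Fintype.equivFin κ).symm)
      (a ∘ (Fintype.equivFin κ).symm)
    rw [← Matrix.submatrix_submatrix, ← hN, Matrix.det_submatrix_equiv_self] at this
    exact hdet this
  obtain ⟨A, hA, -, hAc⟩ := Finset.exists_subsuperset_card_eq
    (Finset.subset_univ (Finset.univ.image a)) (n := r)
    (by rw [Finset.card_image_of_injective _ ha]; exact hcard) (by simpa using hr)
  refine ⟨A, hAc, fun F hF i j => ?_⟩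
  have hF' : ∀ k j, M (a k) j ∈ F := fun k j => hF _ (hA (by simp)) j
  have hCF : ∀ k, C i k ∈ F := by
    let N' : Matrix κ κ F := Matrix.of fun k l => ⟨N k l, hF' _ _⟩
    have hmap : F.subtype.mapMatrix N' = N := by ext; rfl
    have hd : F.subtype N'.det = N.det := by rw [RingHom.map_det, hmap]
    have hinv : ∀ k l, N⁻¹ k l ∈ F := by
      intro k l
      rw [Matrix.inv_def, Matrix.smul_apply, Ring.inverse_eq_inv', smul_eq_mul]
      refine F.mul_mem (F.inv_mem ?_) ?_
      · rw [← hd]; exact (N'.det).2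
      · rw [← hmap, ← RingHom.map_adjugate]; exact (N'.adjugate k l).2
    have hv : Matrix.vecMul (C i) N = fun l => M i (a l) := by
      ext l; rw [hC i]; rfl
    have : C i = Matrix.vecMul (fun l => M i (a l)) N⁻¹ := by
      rw [← hv, Matrix.vecMul_vecMul, Matrix.mul_nonsing_inv _ (isUnit_iff_ne_zero.2 hdet),
        Matrix.vecMul_one]
    intro k
    rw [this]
    simp only [Matrix.vecMul, dotProduct]
    refine F.sum_mem fun l _ => F.mul_mem ?_ (hinv _ _)
    rw [hsym]; exact hF' _ _
  rw [hC i]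
  exact F.sum_mem fun k _ => F.mul_mem (hCF k) (hF' _ _)

theorem dim_int {R S : Type*} [CommRing R] [CommRing S] [Algebra R S] [Algebra.IsIntegral R S]
    (h : Function.Injective (algebraMap R S)) : ringKrullDim S = ringKrullDim R := by
  apply le_antisymm
  · refine Order.krullDim_le_of_strictMono (PrimeSpectrum.comap (algebraMap R S)) ?_
    intro p q hpq
    exact Ideal.IsIntegral.comap_lt_comap (R := R) hpq
  · refine iSup_le fun l => ?_
    obtain ⟨Q, -, hQ1, hQ2⟩ := Ideal.exists_ideal_over_prime_of_isIntegral (S := S)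
      l.head.asIdeal (⊥ : Ideal S) (by
        intro x hx
        have : x = 0 := h (by simpa using hx)
        simp [this])
    have : Q.LiesOver l.head.asIdeal := ⟨hQ2.symm⟩
    obtain ⟨L, hL, -⟩ := Ideal.exists_ltSeries_of_hasGoingUp l Q
    rw [← hL]
    exact le_iSup (fun l : LTSeries (PrimeSpectrum S) => (l.length : WithBot ℕ∞)) L

/-- Upper bound on the dimension through transcendence degrees of domain quotients. -/
theorem dim_le_of_trdeg {K A : Type*} [Field K] [CommRing A] [Algebra K A] [Nontrivial A]
    [Algebra.FiniteType K A] (d : ℕ)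
    (h : ∀ P : Ideal A, P.IsPrime → Algebra.trdeg K (A ⧸ P) ≤ d) : ringKrullDim A ≤ d := by
  obtain ⟨s, g, hg, hgint⟩ := exists_integral_inj_algHom_of_fg K A
  let : Algebra (MvPolynomial (Fin s) K) A := g.toRingHom.toAlgebra
  have : Algebra.IsIntegral (MvPolynomial (Fin s) K) A := ⟨hgint⟩
  have e := dim_int (R := MvPolynomial (Fin s) K) (S := A) hg
  rw [MvPolynomial.ringKrullDim_of_isNoetherianRing, ringKrullDim_eq_zero_of_field, zero_add,
    Nat.card_fin] at e
  rw [e]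
  obtain ⟨Q, -, hQ1, hQ2⟩ := Ideal.exists_ideal_over_prime_of_isIntegral (S := A)
      (⊥ : Ideal (MvPolynomial (Fin s) K)) (⊥ : Ideal A) (by
        intro x hx
        have hx' : g x = 0 := hx
        have : x = 0 := hg (by simpa using hx')
        simp [this])
  let f : MvPolynomial (Fin s) K →ₐ[K] A ⧸ Q := (Ideal.Quotient.mkₐ K Q).comp g
  have hf : Function.Injective f := by
    rw [injective_iff_map_eq_zero]
    intro x hx
    have : g x ∈ Q := Ideal.Quotient.eq_zero_iff_mem.1 hx
    have hx' : x ∈ Q.comap (algebraMap (MvPolynomial (Fin s) K) A) := this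
    rw [hQ2] at hx'
    simpa using hx'
  have h1 := (lift_trdeg_le_of_injective f hf)
  rw [MvPolynomial.trdeg_of_isDomain] at h1
  have h2 := h1.trans (Cardinal.lift_le.2 (h Q hQ1))
  simp at h2
  exact_mod_cast h2

theorem le_dim_of_algInd {K A F ι : Type*} [Field K] [CommRing A] [Algebra K A] [Nontrivial A]
    [Algebra.FiniteType K A] [Field F] [Algebra K F] [Fintype ι] (ψ : A →ₐ[K] F) (y : ι → A)
    (hy : AlgebraicIndependent K (ψ ∘ y)) : (Fintype.card ι : WithBot ℕ∞) ≤ ringKrullDim A := by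
  obtain ⟨s, g, hg, hgint⟩ := exists_integral_inj_algHom_of_fg K A
  have e : ringKrullDim A = s := by
    let : Algebra (MvPolynomial (Fin s) K) A := g.toRingHom.toAlgebra
    have : Algebra.IsIntegral (MvPolynomial (Fin s) K) A := ⟨hgint⟩
    have e := dim_int (R := MvPolynomial (Fin s) K) (S := A) hg
    rwa [MvPolynomial.ringKrullDim_of_isNoetherianRing, ringKrullDim_eq_zero_of_field, zero_add,
      Nat.card_fin] at e
  rw [e]
  let B := ψ.range
  let z : Fin s → B := fun i => ψ.rangeRestrict (g (MvPolynomial.X i))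
  have hy' : AlgebraicIndependent K (fun i => ψ.rangeRestrict (y i)) :=
    AlgebraicIndependent.of_comp B.val hy
  have hgz : ∀ p, ψ.rangeRestrict (g p) ∈ Algebra.adjoin K (Set.range z) := by
    intro p
    have : (ψ.rangeRestrict.comp g) = MvPolynomial.aeval z := by
      ext i; simp [z]
    change (ψ.rangeRestrict.comp g) p ∈ _
    rw [this, Algebra.adjoin_range_eq_range_aeval]
    exact ⟨p, rfl⟩
  have halg : Algebra.IsAlgebraic (Algebra.adjoin K (Set.range z)) B := by
    refine ⟨fun b => ?_⟩
    obtain ⟨a, rfl⟩ := ψ.rangeRestrict_surjective b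
    obtain ⟨p, hp, hpa⟩ := hgint a
    apply IsIntegral.isAlgebraic
    let g' : MvPolynomial (Fin s) K →+* Algebra.adjoin K (Set.range z) :=
      (ψ.rangeRestrict.comp g).toRingHom.codRestrict (Algebra.adjoin K (Set.range z)) hgz
    refine ⟨p.map g', hp.map _, ?_⟩
    rw [Polynomial.eval₂_map]
    have h3 := congrArg ψ.rangeRestrict.toRingHom hpa
    rw [Polynomial.hom_eval₂, map_zero] at h3
    exact h3
  have h1 := Algebra.IsAlgebraic.trdeg_le_cardinalMk K (Set.range z)
  have h2 := hy'.lift_cardinalMk_le_trdeg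
  have h4 := Cardinal.mk_range_le_lift (f := z)
  have h5 : Cardinal.mk (Set.range z) ≤ (s : Cardinal) := by
    simpa using h4
  have h3 := h2.trans (Cardinal.lift_le.2 (h1.trans h5))
  simp at h3
  exact_mod_cast h3

theorem trdeg_le_of_minors {K : Type*} [Field K] {n r : ℕ} (hr : r ≤ n)
    {D : Type*} [CommRing D] [IsDomain D] [Algebra K D]
    (φ : MvPolynomial (Sym2 (Fin n)) K →ₐ[K] D) (hφ : Function.Surjective φ)
    (h : ∀ a b : Fin (r+1) → Fin n, StrictMono a → StrictMono b → φ (symMinor K a b) = 0) :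
    Algebra.trdeg K D ≤ ((((2 * n + 1 - r) * r) / 2 : ℕ) : Cardinal) := by
  classical
  let L := FractionRing D
  let x : Sym2 (Fin n) → L := fun p => algebraMap D L (φ (MvPolynomial.X p))
  let M : Matrix (Fin n) (Fin n) L := Matrix.of fun i j => x s(i, j)
  obtain ⟨A, hA, hgen⟩ := field_gen hr M (fun i j => by simp [M, Sym2.eq_swap]) (by
    intro a b ha hb
    have := congrArg (algebraMap D L) (h a b ha hb)
    rw [map_zero, symMinor, AlgHom.map_det, RingHom.map_det] at this
    exact this)
  let T := {p : Sym2 (Fin n) // ∃ i ∈ A, i ∈ p}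
  let S : Set L := Set.range fun p : T => x p.1
  have hx : ∀ p, x p ∈ IntermediateField.adjoin K S := by
    have := hgen (IntermediateField.adjoin K S).toSubfield (by
      intro i hi j
      exact IntermediateField.subset_adjoin K S ⟨⟨s(i,j), i, hi, by simp⟩, rfl⟩)
    intro p
    induction p using Sym2.ind with
    | _ i j => exact this i j
  have hD : ∀ d : D, algebraMap D L d ∈ IntermediateField.adjoin K S := by
    intro d
    obtain ⟨q, rfl⟩ := hφ d
    have : ((IsScalarTower.toAlgHom K D L).comp φ) = MvPolynomial.aeval x := by
      ext i; simp [x]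
    change ((IsScalarTower.toAlgHom K D L).comp φ) q ∈ _
    rw [this]
    have h1 : MvPolynomial.aeval x q ∈ Algebra.adjoin K (Set.range x) := by
      rw [Algebra.adjoin_range_eq_range_aeval]; exact ⟨q, rfl⟩
    have h2 : Algebra.adjoin K (Set.range x) ≤ (IntermediateField.adjoin K S).toSubalgebra :=
      Algebra.adjoin_le (by rintro _ ⟨p, rfl⟩; exact hx p)
    exact h2 h1
  have hL : ∀ l : L, l ∈ IntermediateField.adjoin K S := by
    intro l
    obtain ⟨a, b, -, rfl⟩ := IsFractionRing.div_surjective (A := D) l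
    exact div_mem (hD a) (hD b)
  have halg : Algebra.IsAlgebraic (Algebra.adjoin K S) L := by
    refine ⟨fun l => ?_⟩
    obtain ⟨a, ha, b, hb, rfl⟩ := IntermediateField.mem_adjoin_iff_div.1 (hL l)
    rw [div_eq_mul_inv]
    exact (isAlgebraic_algebraMap (⟨a, ha⟩ : Algebra.adjoin K S)).mul
      (isAlgebraic_algebraMap (⟨b, hb⟩ : Algebra.adjoin K S)).inv
  have h1 := Algebra.IsAlgebraic.trdeg_le_cardinalMk K S
  have h0 := trdeg_le_of_injective (IsScalarTower.toAlgHom K D L)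
    (IsFractionRing.injective D L)
  have h4 := Cardinal.mk_range_le_lift (f := fun p : T => x p.1)
  have h5 : Cardinal.mk S ≤ ((((2 * n + 1 - r) * r) / 2 : ℕ) : Cardinal) := by
    rw [← card_meet A hA]
    simpa using h4
  exact_mod_cast h0.trans (h1.trans h5)

theorem exists_generic {K : Type*} [Field K] {n r : ℕ} (A : Finset (Fin n)) (hA : A.card = r) :
    ∃ φ : MvPolynomial (Sym2 (Fin n)) K →ₐ[K]
        FractionRing (MvPolynomial {p : Sym2 (Fin n) // ∃ i ∈ A, i ∈ p} K),
      (∀ p : {p : Sym2 (Fin n) // ∃ i ∈ A, i ∈ p},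
        φ (MvPolynomial.X p.1) =
          algebraMap (MvPolynomial {p : Sym2 (Fin n) // ∃ i ∈ A, i ∈ p} K) _ (MvPolynomial.X p)) ∧
      ∀ a b : Fin (r+1) → Fin n, φ (symMinor K a b) = 0 := by
  classical
  let T := {p : Sym2 (Fin n) // ∃ i ∈ A, i ∈ p}
  let R := MvPolynomial T K
  let F := FractionRing R
  let B0 : Matrix A (Fin n) R := Matrix.of fun k j => MvPolynomial.X ⟨s(k.1, j), k.1, k.2, by simp⟩
  let B : Matrix A (Fin n) F := B0.map (algebraMap R F)
  let N0 : Matrix A A R := B0.submatrix id Subtype.val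
  let N : Matrix A A F := B.submatrix id Subtype.val
  have hN0 : N0.det ≠ 0 := by
    intro h0
    let ev : R →+* K := MvPolynomial.eval fun p : T => if p.1.IsDiag then 1 else 0
    have h1 := congrArg ev h0
    rw [RingHom.map_det, map_zero] at h1
    have : ev.mapMatrix N0 = 1 := by
      ext i j
      simp only [ev, N0, B0, Matrix.one_apply, Subtype.ext_iff, RingHom.mapMatrix_apply,
        Matrix.map_apply, Matrix.submatrix_apply, Matrix.of_apply, id]
      refine (MvPolynomial.eval_X _).trans ?_
      simp only [Sym2.mk_isDiag_iff]
    rw [this, Matrix.det_one] at h1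
    exact one_ne_zero h1
  have hN : N.det ≠ 0 := by
    have : N = (algebraMap R F).mapMatrix N0 := rfl
    rw [this, ← RingHom.map_det]
    exact fun h => hN0 ((map_eq_zero_iff _ (IsFractionRing.injective R F)).1 h)
  have hNt : N.transpose = N := by
    ext i j
    simp only [N, B, B0, Matrix.transpose_apply, Matrix.submatrix_apply, Matrix.map_apply,
      Matrix.of_apply, id]
    congr 3
    exact Sym2.eq_swap
  let M : Matrix (Fin n) (Fin n) F := B.transpose * N⁻¹ * B
  have hMt : M.transpose = M := by
    simp only [M, Matrix.transpose_mul, Matrix.transpose_transpose, Matrix.transpose_nonsing_inv,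
      hNt, Matrix.mul_assoc]
  have hMs : ∀ i j, M i j = M j i := fun i j => congrFun (congrFun hMt j) i
  have hMB : ∀ (k : A) j, M k.1 j = B k j := by
    intro k j
    have h1 : M.submatrix Subtype.val id = B := by
      have : M.submatrix (Subtype.val : A → Fin n) id = N.transpose * N⁻¹ * B := rfl
      rw [this, hNt, Matrix.mul_nonsing_inv _ (isUnit_iff_ne_zero.2 hN), Matrix.one_mul]
    exact congrFun (congrFun h1 k) j
  let φ : MvPolynomial (Sym2 (Fin n)) K →ₐ[K] F :=
    MvPolynomial.aeval (Sym2.lift ⟨fun i j => M i j, hMs⟩)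
  refine ⟨φ, ?_, ?_⟩
  · rintro ⟨p, i, hi, hp⟩
    obtain ⟨j, rfl⟩ := hp
    simp only [φ, MvPolynomial.aeval_X, Sym2.lift_mk]
    exact hMB ⟨i, hi⟩ j
  · intro a b
    have h1 : φ (symMinor K a b) = (M.submatrix a b).det := by
      rw [symMinor, AlgHom.map_det]
      congr 1
      ext i j
      simp [φ]
    rw [h1]
    by_contra h0
    have h2 := Matrix.rank_of_det_ne_zero h0
    have h3 : M.submatrix a b = (B.transpose * N⁻¹).submatrix a id * B.submatrix id b := rfl
    have h4 := Matrix.rank_mul_le_right ((B.transpose * N⁻¹).submatrix a id) (B.submatrix id b)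
    have h5 := Matrix.rank_le_card_height (B.submatrix id b)
    rw [← h3, h2] at h4
    simp [hA] at h4 h5
    omega

theorem stmt16 {K : Type*} [Field K] (n t : ℕ) (ht2 : 2 ≤ t) (htn : t ≤ n) :
    ringKrullDim (MvPolynomial (Sym2 (Fin n)) K ⧸ minorsIdeal K n t) =
      (((2 * n + 2 - t) * (t - 1)) / 2 : ℕ) := by
  obtain ⟨r, rfl⟩ : ∃ r, t = r + 1 := ⟨t - 1, by omega⟩
  have hr : r ≤ n := by omega
  have e : (2 * n + 2 - (r + 1)) * (r + 1 - 1) / 2 = ((2 * n + 1 - r) * r) / 2 := by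
    congr 2; omega
  rw [e]
  obtain ⟨A, -, hA⟩ := Finset.exists_subset_card_eq (s := (Finset.univ : Finset (Fin n)))
    (n := r) (by simpa using hr)
  obtain ⟨φ, hφX, hφ⟩ := exists_generic (K := K) A hA
  have hker : ∀ p ∈ minorsIdeal K n (r+1), φ p = 0 := by
    intro p hp
    have : minorsIdeal K n (r+1) ≤ RingHom.ker φ := by
      refine Ideal.span_le.2 ?_
      rintro _ ⟨a, b, -, -, rfl⟩
      exact hφ a b
    exact this hp
  have hnt : Nontrivial (MvPolynomial (Sym2 (Fin n)) K ⧸ minorsIdeal K n (r+1)) := by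
    refine Ideal.Quotient.nontrivial_iff.2 fun h => ?_
    have := hker 1 (by rw [h]; trivial)
    simp at this
  apply le_antisymm
  · apply dim_le_of_trdeg (K := K)
    intro P hP
    refine trdeg_le_of_minors hr ((Ideal.Quotient.mkₐ K P).comp (Ideal.Quotient.mkₐ K _))
      ((Ideal.Quotient.mkₐ_surjective K P).comp (Ideal.Quotient.mkₐ_surjective K _)) ?_
    intro a b ha hb
    have : Ideal.Quotient.mkₐ K (minorsIdeal K n (r+1)) (symMinor K a b) = 0 :=
      Ideal.Quotient.eq_zero_iff_mem.2 (Ideal.subset_span ⟨a, b, ha, hb, rfl⟩)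
    rw [AlgHom.comp_apply, this, map_zero]
  · rw [← card_meet A hA]
    refine le_dim_of_algInd (Ideal.Quotient.liftₐ (minorsIdeal K n (r+1)) φ hker)
      (fun p => Ideal.Quotient.mk _ (MvPolynomial.X p.1)) ?_
    have : (Ideal.Quotient.liftₐ (minorsIdeal K n (r+1)) φ hker) ∘
      (fun p : {p : Sym2 (Fin n) // ∃ i ∈ A, i ∈ p} =>
        Ideal.Quotient.mk (minorsIdeal K n (r+1)) (MvPolynomial.X p.1))
      = fun p : {p : Sym2 (Fin n) // ∃ i ∈ A, i ∈ p} => algebraMap (MvPolynomial {p : Sym2 (Fin n) // ∃ i ∈ A, i ∈ p} K) (FractionRing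
          (MvPolynomial {p : Sym2 (Fin n) // ∃ i ∈ A, i ∈ p} K)) (MvPolynomial.X p) := by
      ext p
      exact hφX p
    rw [this]
    exact (MvPolynomial.algebraicIndependent_X _ K).map' (f := IsScalarTower.toAlgHom K
      (MvPolynomial {p : Sym2 (Fin n) // ∃ i ∈ A, i ∈ p} K) (FractionRing
          (MvPolynomial {p : Sym2 (Fin n) // ∃ i ∈ A, i ∈ p} K))) (IsFractionRing.injective _ _)
end
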